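/- arXiv:2211.07033 — 2 statements merged into one kernel-verified Lean document; each statement's English description precedes it below -/
import Mathlib

section
/- For every integer a ≥ 3 there exist constants c_a and C_a with 1 < c_a ≤ C_a such that the following holds. Let b > 0 be a constant and p = p(n) = b/n. If T⃗ is an oriented tree with a(T⃗) = a, then: if b < c_a, then P(G(n,p) → T⃗) → 0 as n → ∞; and if b > C_a, then P(G(n,p) → T⃗) → 1 as n → ∞. -/
open Classical in
/-- The probability that the binomial random graph `G(n,p)` satisfies the property `Q`. -/
noncomputable def probGnp (n : ℕ) (p : ℝ) (Q : SimpleGraph (Fin n) → Prop) : ℝ :=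
  ∑ G : SimpleGraph (Fin n),
    if Q G then p ^ G.edgeSet.ncard * (1 - p) ^ (n.choose 2 - G.edgeSet.ncard) else 0
/-- `o` is an orientation of the simple graph `G`: every edge of `G` is assigned
exactly one direction, and there are no other arcs. -/
def IsOrientation {α : Type*} (G : SimpleGraph α) (o : α → α → Prop) : Prop :=
  (∀ u v, o u v → G.Adj u v) ∧ ∀ u v, G.Adj u v → (o u v ↔ ¬ o v u)

/-- The digraph `o` contains a (not necessarily induced) copy of the oriented graph `H`
as a subdigraph. -/
def HasCopy {α β : Type*} (o : α → α → Prop) (H : β → β → Prop) : Prop :=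
  ∃ f : β → α, Function.Injective f ∧ ∀ a b, H a b → o (f a) (f b)

/-- `G → H⃗`: every orientation of `G` contains a copy of `H`. -/
def Arrows {α β : Type*} (G : SimpleGraph α) (H : β → β → Prop) : Prop :=
  ∀ o : α → α → Prop, IsOrientation G o → HasCopy o H

/-- The height `h(T⃗)` of an oriented tree: the number of arcs of a longest
directed path in `T⃗`. -/
noncomputable def dirHeight {β : Type*} [Fintype β] (T : β → β → Prop) : ℕ :=
  sSup {k : ℕ | ∃ f : Fin (k + 1) → β, Function.Injective f ∧
    ∀ i : Fin k, T (f i.castSucc) (f i.succ)}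

/-- The maximum degree of a finite simple graph. -/
noncomputable def maxDeg {β : Type*} [Fintype β] (G : SimpleGraph β) : ℕ :=
  sSup {d : ℕ | ∃ v, d = (G.neighborSet v).ncard}

/-- The parameter `a(T⃗) = max{h(T⃗), Δ(T⃗)}` of an oriented tree. -/
noncomputable def treeParam {β : Type*} [Fintype β] (T : β → β → Prop) : ℕ :=
  max (dirHeight T) (maxDeg (SimpleGraph.fromRel T))



open Classical in
/-- weight of a graph -/
noncomputable def gw (n : ℕ) (p : ℝ) (G : SimpleGraph (Fin n)) : ℝ :=
  p ^ G.edgeSet.ncard * (1 - p) ^ (n.choose 2 - G.edgeSet.ncard)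

open Classical in
/-- expectation -/
noncomputable def Ex (n : ℕ) (p : ℝ) (X : SimpleGraph (Fin n) → ℝ) : ℝ :=
  ∑ G : SimpleGraph (Fin n), gw n p G * X G

open Classical in
theorem probGnp_eq_Ex (n : ℕ) (p : ℝ) (Q : SimpleGraph (Fin n) → Prop) :
    probGnp n p Q = Ex n p (fun G => if Q G then 1 else 0) := by
  unfold probGnp Ex gw
  refine Finset.sum_congr rfl fun G _ => ?_
  by_cases h : Q G <;> simp [h]

open Classical in
/-- edge finset of the complete graph on `S` -/
noncomputable def ES {V : Type*} (S : Finset V) : Finset (Sym2 V) := S.offDiag.image (fun x => s(x.1, x.2))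

theorem ES_card {V : Type*} (S : Finset V) : (ES S).card = S.card.choose 2 := by
  classical
  have := Sym2.card_image_offDiag S
  rw [← this]
  rfl

theorem mem_ES {V : Type*} (S : Finset V) (x y : V) : s(x, y) ∈ ES S ↔ x ∈ S ∧ y ∈ S ∧ x ≠ y := by
  classical
  unfold ES
  simp only [Finset.mem_image, Finset.mem_offDiag, Prod.exists, Sym2.eq_iff]
  constructor
  · rintro ⟨a, b, ⟨h1, h2, h3⟩, (⟨rfl, rfl⟩ | ⟨rfl, rfl⟩)⟩
    · exact ⟨h1, h2, h3⟩
    · exact ⟨h2, h1, h3.symm⟩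
  · rintro ⟨h1, h2, h3⟩
    exact ⟨x, y, ⟨h1, h2, h3⟩, Or.inl ⟨rfl, rfl⟩⟩

theorem ES_mono {V : Type*} {S S' : Finset V} (h : S ⊆ S') : ES S ⊆ ES S' := by
  intro e
  induction e using Sym2.ind with
  | _ x y => 
    rw [mem_ES, mem_ES]
    rintro ⟨h1, h2, h3⟩
    exact ⟨h h1, h h2, h3⟩

open Classical in
theorem sum_graph_prod (n : ℕ) (f g : Sym2 (Fin n) → ℝ) :
    ∑ G : SimpleGraph (Fin n), (∏ e ∈ (ES Finset.univ).filter (· ∈ G.edgeSet), f e) *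
      (∏ e ∈ (ES Finset.univ).filter (· ∉ G.edgeSet), g e) = ∏ e ∈ ES (Finset.univ : Finset (Fin n)), (f e + g e) := by
  rw [Finset.prod_add]
  refine Finset.sum_bij' (fun G _ => (ES Finset.univ).filter (· ∈ G.edgeSet))
    (fun t _ => SimpleGraph.fromEdgeSet (t : Set (Sym2 (Fin n)))) ?_ ?_ ?_ ?_ ?_
  · intro G _
    simp
  · intro t ht
    simp
  · intro G _
    ext x y
    simp only [SimpleGraph.fromEdgeSet_adj, Finset.coe_filter, Set.mem_ofPred_eq, SimpleGraph.mem_edgeSet, mem_ES]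
    constructor
    · rintro ⟨⟨_, h⟩, _⟩; exact h
    · intro h; exact ⟨⟨⟨Finset.mem_univ _, Finset.mem_univ _, h.ne⟩, h⟩, h.ne⟩
  · intro t ht
    ext e
    induction e using Sym2.ind with
    | _ x y => 
      simp only [Finset.mem_filter, SimpleGraph.mem_edgeSet, SimpleGraph.fromEdgeSet_adj, mem_ES, Finset.mem_coe]
      constructor
      · rintro ⟨_, h, _⟩; exact h
      · intro h
        have h2 := Finset.mem_powerset.1 ht h
        rw [mem_ES] at h2
        exact ⟨h2, h, h2.2.2⟩
  · intro G _
    congr 2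
    ext e
    simp
    tauto

open Classical in
theorem gw_eq_prod (n : ℕ) (p : ℝ) (G : SimpleGraph (Fin n)) :
    gw n p G = (∏ e ∈ (ES Finset.univ).filter (· ∈ G.edgeSet), p) *
      (∏ e ∈ (ES Finset.univ).filter (· ∉ G.edgeSet), (1 - p)) := by
  have h1 : G.edgeSet.ncard = ((ES Finset.univ).filter (· ∈ G.edgeSet)).card := by
    rw [← Set.ncard_coe_finset]
    congr 1
    ext e
    induction e using Sym2.ind with
    | _ x y => 
      simp only [Finset.coe_filter, Set.mem_ofPred_eq, SimpleGraph.mem_edgeSet, mem_ES]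
      exact ⟨fun h => ⟨⟨Finset.mem_univ _, Finset.mem_univ _, h.ne⟩, h⟩, fun h => h.2⟩
  have h2 := Finset.card_filter_add_card_filter_not (s := ES (Finset.univ : Finset (Fin n))) (· ∈ G.edgeSet)
  rw [ES_card, Finset.card_univ, Fintype.card_fin] at h2
  unfold gw
  rw [Finset.prod_const, Finset.prod_const, h1]
  congr 2
  omega

open Classical in
theorem Ex_subset (n : ℕ) (p : ℝ) (F : Finset (Sym2 (Fin n))) (hF : F ⊆ ES Finset.univ) :
    Ex n p (fun G => if (F : Set (Sym2 (Fin n))) ⊆ G.edgeSet then 1 else 0) = p ^ F.card := by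
  have h := sum_graph_prod n (fun _ => p) (fun e => if e ∈ F then 0 else 1 - p)
  have h3 : ∏ e ∈ ES (Finset.univ : Finset (Fin n)), (p + (if e ∈ F then 0 else 1 - p)) = p ^ F.card := by
    rw [← Finset.prod_sdiff hF, Finset.prod_congr rfl (g := fun _ => (1:ℝ)),
      Finset.prod_congr (s₁ := F) rfl (g := fun _ => p)]
    · simp
    · intro e he; simp [he]
    · intro e he; simp at he; simp [he.2]
  rw [h3] at h
  rw [← h]
  unfold Ex
  refine Finset.sum_congr rfl fun G _ => ?_
  rw [gw_eq_prod]
  beta_reduce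
  split_ifs with hG
  · rw [mul_one]
    congr 1
    refine Finset.prod_congr rfl fun e he => ?_
    rw [if_neg]
    intro heF
    exact (Finset.mem_filter.1 he).2 (hG heF)
  · rw [mul_zero]
    obtain ⟨e, he, heG⟩ := Set.not_subset.1 hG
    symm
    apply mul_eq_zero_of_right
    apply Finset.prod_eq_zero (i := e)
    · exact Finset.mem_filter.2 ⟨hF he, heG⟩
    · exact if_pos he

open Classical in
theorem Ex_disjoint (n : ℕ) (p : ℝ) (F : Finset (Sym2 (Fin n))) (hF : F ⊆ ES Finset.univ) :
    Ex n p (fun G => if (∀ e ∈ F, e ∉ G.edgeSet) then 1 else 0) = (1 - p) ^ F.card := by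
  have h := sum_graph_prod n (fun e => if e ∈ F then 0 else p) (fun e => 1 - p)
  have h3 : ∏ e ∈ ES (Finset.univ : Finset (Fin n)), ((if e ∈ F then 0 else p) + (1 - p)) = (1 - p) ^ F.card := by
    rw [← Finset.prod_sdiff hF, Finset.prod_congr rfl (g := fun _ => (1:ℝ)),
      Finset.prod_congr (s₁ := F) rfl (g := fun _ => 1 - p)]
    · simp
    · intro e he; simp [he]
    · intro e he; simp at he; simp [he.2]
  rw [h3] at h
  rw [← h]
  unfold Ex
  refine Finset.sum_congr rfl fun G _ => ?_
  rw [gw_eq_prod]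
  beta_reduce
  split_ifs with hG
  · rw [mul_one]
    congr 1
    refine Finset.prod_congr rfl fun e he => ?_
    rw [if_neg]
    intro heF
    exact hG e heF (Finset.mem_filter.1 he).2
  · rw [mul_zero]
    push Not at hG
    obtain ⟨e, he, heG⟩ := hG
    symm
    apply mul_eq_zero_of_left
    apply Finset.prod_eq_zero (i := e)
    · exact Finset.mem_filter.2 ⟨hF he, heG⟩
    · exact if_pos he

theorem gw_nonneg {n : ℕ} {p : ℝ} (h0 : 0 ≤ p) (h1 : p ≤ 1) (G : SimpleGraph (Fin n)) : 0 ≤ gw n p G := by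
  unfold gw
  have : 0 ≤ 1 - p := by linarith
  positivity

theorem Ex_mono {n : ℕ} {p : ℝ} (h0 : 0 ≤ p) (h1 : p ≤ 1) {X Y : SimpleGraph (Fin n) → ℝ}
    (h : ∀ G, X G ≤ Y G) : Ex n p X ≤ Ex n p Y := by
  classical
  unfold Ex
  exact Finset.sum_le_sum fun G _ => mul_le_mul_of_nonneg_left (h G) (gw_nonneg h0 h1 G)

theorem Ex_sum {ι : Type*} (n : ℕ) (p : ℝ) (s : Finset ι) (X : ι → SimpleGraph (Fin n) → ℝ) :
    Ex n p (fun G => ∑ i ∈ s, X i G) = ∑ i ∈ s, Ex n p (X i) := by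
  classical
  unfold Ex
  rw [Finset.sum_comm]
  refine Finset.sum_congr rfl fun G _ => ?_
  rw [Finset.mul_sum]

theorem Ex_add (n : ℕ) (p : ℝ) (X Y : SimpleGraph (Fin n) → ℝ) :
    Ex n p (fun G => X G + Y G) = Ex n p X + Ex n p Y := by
  classical
  unfold Ex
  rw [← Finset.sum_add_distrib]
  refine Finset.sum_congr rfl fun G _ => ?_
  ring

theorem Ex_mul (n : ℕ) (p c : ℝ) (X : SimpleGraph (Fin n) → ℝ) :
    Ex n p (fun G => c * X G) = c * Ex n p X := by
  classical
  unfold Ex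
  rw [Finset.mul_sum]
  refine Finset.sum_congr rfl fun G _ => ?_
  ring

theorem Ex_one (n : ℕ) (p : ℝ) : Ex n p (fun _ => 1) = 1 := by
  classical
  have := Ex_subset n p ∅ (by simp)
  simpa using this

theorem prob_nonneg {n : ℕ} {p : ℝ} (h0 : 0 ≤ p) (h1 : p ≤ 1) (Q : SimpleGraph (Fin n) → Prop) :
    0 ≤ probGnp n p Q := by
  classical
  rw [probGnp_eq_Ex]
  unfold Ex
  exact Finset.sum_nonneg fun G _ => mul_nonneg (gw_nonneg h0 h1 G) (by beta_reduce; split_ifs <;> norm_num)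

theorem prob_le_Ex {n : ℕ} {p : ℝ} (h0 : 0 ≤ p) (h1 : p ≤ 1) (Q : SimpleGraph (Fin n) → Prop)
    (X : SimpleGraph (Fin n) → ℝ) (hX : ∀ G, 0 ≤ X G) (hQ : ∀ G, Q G → 1 ≤ X G) :
    probGnp n p Q ≤ Ex n p X := by
  classical
  rw [probGnp_eq_Ex]
  refine Ex_mono h0 h1 fun G => ?_
  split_ifs with h
  · exact hQ G h
  · exact hX G

theorem prob_mono {n : ℕ} {p : ℝ} (h0 : 0 ≤ p) (h1 : p ≤ 1) {Q R : SimpleGraph (Fin n) → Prop}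
    (h : ∀ G, Q G → R G) : probGnp n p Q ≤ probGnp n p R := by
  classical
  rw [probGnp_eq_Ex, probGnp_eq_Ex]
  refine Ex_mono h0 h1 fun G => ?_
  by_cases hQ : Q G
  · simp [hQ, h G hQ]
  · simp only [hQ, if_false]; split_ifs <;> norm_num

theorem prob_or_le {n : ℕ} {p : ℝ} (h0 : 0 ≤ p) (h1 : p ≤ 1) {Q R : SimpleGraph (Fin n) → Prop} :
    probGnp n p (fun G => Q G ∨ R G) ≤ probGnp n p Q + probGnp n p R := by
  classical
  rw [probGnp_eq_Ex, probGnp_eq_Ex, probGnp_eq_Ex, ← Ex_add]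
  refine Ex_mono h0 h1 fun G => ?_
  by_cases hQ : Q G <;> by_cases hR : R G <;> simp [hQ, hR]

theorem prob_not {n : ℕ} {p : ℝ} (Q : SimpleGraph (Fin n) → Prop) :
    probGnp n p Q = 1 - probGnp n p (fun G => ¬ Q G) := by
  classical
  rw [probGnp_eq_Ex, probGnp_eq_Ex, eq_sub_iff_add_eq, ← Ex_add]
  refine Eq.trans ?_ (Ex_one n p)
  congr 1
  ext G
  by_cases hQ : Q G <;> simp [hQ]


open Classical in
/-- no nonempty subgraph of minimum degree at least three -/
def NoCore {V : Type*} (G : SimpleGraph V) : Prop :=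
  ∀ S : Finset V, S.Nonempty → ∃ v ∈ S, (S.filter (fun w => G.Adj v w)).card ≤ 2

open Classical in
theorem NoCore.struct_aux {V : Type*} {G : SimpleGraph V} (h : NoCore G) (k : ℕ) :
    ∀ S : Finset V, S.card = k → ∃ (r : V → ℕ) (I : V → Prop) (c : V → Fin 3),
      (∀ u ∈ S, ∀ w ∈ S, G.Adj u w → r u ≠ r w) ∧
      (∀ u ∈ S, (S.filter (fun w => G.Adj u w ∧ r w < r u)).card ≤ 2) ∧
      (∀ u ∈ S, ∀ w ∈ S, G.Adj u w → ¬ (I u ∧ I w)) ∧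
      (∀ u ∈ S, ¬ I u → (S.filter (fun w => G.Adj u w ∧ ¬ I w ∧ r w < r u)).card ≤ 1) ∧
      (∀ u ∈ S, ∀ w ∈ S, G.Adj u w → c u ≠ c w) := by
  induction k with
  | zero =>
    intro S hS
    rw [Finset.card_eq_zero] at hS
    subst hS
    exact ⟨fun _ => 0, fun _ => True, fun _ => 0, by simp, by simp, by simp, by simp, by simp⟩
  | succ k ih =>
    intro S hS
    obtain ⟨v, hv, hdeg⟩ := h S (Finset.card_pos.1 (by omega))
    obtain ⟨r, I, c, h1, h2, h3, h4, h5⟩ := ih (S.erase v) (by rw [Finset.card_erase_of_mem hv]; omega)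
    have hrlt : ∀ u ∈ S, r u < S.sup r + 1 := fun u hu => Nat.lt_succ_of_le (Finset.le_sup hu)
    obtain ⟨col, hcol⟩ : ∃ col : Fin 3, col ∉ (S.filter (fun w => G.Adj v w)).image c := by
      by_contra hcon
      push Not at hcon
      have : (Finset.univ : Finset (Fin 3)).card ≤ ((S.filter (fun w => G.Adj v w)).image c).card :=
        Finset.card_le_card fun x _ => hcon x
      have h6 := Finset.card_image_le (s := S.filter (fun w => G.Adj v w)) (f := c)
      simp at this
      omega
    have hcol' : ∀ u ∈ S, G.Adj v u → c u ≠ col := by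
      intro u hu hvu hc
      exact hcol (Finset.mem_image.2 ⟨u, Finset.mem_filter.2 ⟨hu, hvu⟩, hc⟩)
    have hmem : ∀ u ∈ S, u ≠ v → u ∈ S.erase v := fun u hu huv => Finset.mem_erase.2 ⟨huv, hu⟩
    refine ⟨Function.update r v (S.sup r + 1),
      Function.update I v (∀ u ∈ S, G.Adj v u → ¬ I u), Function.update c v col, ?_, ?_, ?_, ?_, ?_⟩
    · intro u hu w hw huw
      have hne := huw.ne
      by_cases huv : u = v
      · subst huv
        simp only [Function.update_self, Function.update_of_ne hne.symm]
        exact (hrlt w hw).ne'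
      · by_cases hwv : w = v
        · subst hwv
          simp only [Function.update_self, Function.update_of_ne hne]
          exact (hrlt u hu).ne
        · simp only [Function.update_of_ne huv, Function.update_of_ne hwv]
          exact h1 u (hmem u hu huv) w (hmem w hw hwv) huw
    · intro u hu
      by_cases huv : u = v
      · subst huv
        refine le_trans (Finset.card_le_card ?_) hdeg
        intro w hw
        simp only [Finset.mem_filter] at hw ⊢
        exact ⟨hw.1, hw.2.1⟩
      · refine le_trans (Finset.card_le_card ?_) (h2 u (hmem u hu huv))
        intro w hw
        simp only [Finset.mem_filter, Function.update_of_ne huv] at hw ⊢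
        by_cases hwv : w = v
        · subst hwv
          simp only [Function.update_self] at hw
          have := hrlt u hu
          omega
        · simp only [Function.update_of_ne hwv] at hw
          exact ⟨hmem w hw.1 hwv, hw.2⟩
    · intro u hu w hw huw
      have hne := huw.ne
      by_cases huv : u = v
      · subst huv
        simp only [Function.update_self, Function.update_of_ne hne.symm]
        rintro ⟨h6, h7⟩
        exact h6 w hw huw h7
      · by_cases hwv : w = v
        · subst hwv
          simp only [Function.update_self, Function.update_of_ne hne]
          rintro ⟨h6, h7⟩
          exact h7 u hu huw.symm h6
        · simp only [Function.update_of_ne huv, Function.update_of_ne hwv]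
          exact h3 u (hmem u hu huv) w (hmem w hw hwv) huw
    · intro u hu hIu
      by_cases huv : u = v
      · subst huv
        simp only [Function.update_self] at hIu
        push Not at hIu
        obtain ⟨z, hz, huz, hIz⟩ := hIu
        have : (S.filter (fun w => G.Adj u w ∧ ¬ (Function.update I u (∀ w ∈ S, G.Adj u w → ¬ I w)) w ∧
            (Function.update r u (S.sup r + 1)) w < (Function.update r u (S.sup r + 1)) u)) ⊆
            (S.filter (fun w => G.Adj u w)).erase z := by
          intro w hw
          simp only [Finset.mem_filter, Finset.mem_erase] at hw ⊢
          refine ⟨?_, hw.1, hw.2.1⟩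
          rintro rfl
          rw [Function.update_of_ne huz.ne'] at hw
          exact hw.2.2.1 hIz
        refine le_trans (Finset.card_le_card this) ?_
        rw [Finset.card_erase_of_mem (Finset.mem_filter.2 ⟨hz, huz⟩)]
        exact Nat.sub_le_sub_right hdeg 1
      · rw [Function.update_of_ne huv] at hIu
        refine le_trans (Finset.card_le_card ?_) (h4 u (hmem u hu huv) hIu)
        intro w hw
        simp only [Finset.mem_filter, Function.update_of_ne huv] at hw ⊢
        by_cases hwv : w = v
        · subst hwv
          simp only [Function.update_self] at hw
          have := hrlt u hu
          omega
        · simp only [Function.update_of_ne hwv] at hw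
          exact ⟨hmem w hw.1 hwv, hw.2⟩
    · intro u hu w hw huw
      have hne := huw.ne
      by_cases huv : u = v
      · subst huv
        simp only [Function.update_self, Function.update_of_ne hne.symm]
        exact (hcol' w hw huw).symm
      · by_cases hwv : w = v
        · subst hwv
          simp only [Function.update_self, Function.update_of_ne hne]
          exact hcol' u hu huw.symm
        · simp only [Function.update_of_ne huv, Function.update_of_ne hwv]
          exact h5 u (hmem u hu huv) w (hmem w hw hwv) huw


theorem isOrientation_rev {V : Type*} {G : SimpleGraph V} {o : V → V → Prop} (h : IsOrientation G o) :
    IsOrientation G (fun u v => o v u) := by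
  refine ⟨fun u v huv => (h.1 v u huv).symm, fun u v huv => h.2 v u huv.symm⟩

/-- a good orientation from the existence of patterns -/
theorem NoCore.outdeg {V : Type*} [Fintype V] {G : SimpleGraph V} (h : NoCore G) :
    ∃ o : V → V → Prop, IsOrientation G o ∧ ∀ v, {w | o v w}.ncard ≤ 2 := by
  classical
  obtain ⟨r, I, c, h1, h2, h3, h4, h5⟩ := h.struct_aux _ Finset.univ rfl
  refine ⟨fun u w => G.Adj u w ∧ r w < r u, ⟨fun u w h => h.1, ?_⟩, ?_⟩
  · intro u w huw
    have := h1 u (Finset.mem_univ _) w (Finset.mem_univ _) huw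
    have h6 := huw.symm
    simp only [huw, h6, true_and]
    omega
  · intro v
    refine le_trans (le_of_eq ?_) (h2 v (Finset.mem_univ _))
    rw [← Set.ncard_coe_finset]
    congr 1
    ext w
    simp

theorem NoCore.mixed {V : Type*} [Fintype V] {G : SimpleGraph V} (h : NoCore G) :
    ∃ o : V → V → Prop, IsOrientation G o ∧ ∀ v, (∃ u, o u v) → {w | o v w}.ncard ≤ 1 := by
  classical
  obtain ⟨r, I, c, h1, h2, h3, h4, h5⟩ := h.struct_aux _ Finset.univ rfl
  refine ⟨fun u w => G.Adj u w ∧ (I u ∨ (¬ I w ∧ r w < r u)), ⟨fun u w h => h.1, ?_⟩, ?_⟩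
  · intro u w huw
    have h7 := h1 u (Finset.mem_univ _) w (Finset.mem_univ _) huw
    have h8 := h3 u (Finset.mem_univ _) w (Finset.mem_univ _) huw
    have h6 := huw.symm
    simp only [huw, h6, true_and]
    have h9 : r u < r w ∨ r w < r u := by omega
    have h10 : ¬ (r u < r w ∧ r w < r u) := by omega
    tauto
  · rintro v ⟨u, huv, hu⟩
    have hIv : ¬ I v := by
      intro hv
      have h8 := h3 u (Finset.mem_univ _) v (Finset.mem_univ _) huv
      tauto
    refine le_trans (le_of_eq ?_) (h4 v (Finset.mem_univ _) hIv)
    rw [← Set.ncard_coe_finset]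
    congr 1
    ext w
    simp [hIv]

theorem NoCore.colour {V : Type*} [Fintype V] {G : SimpleGraph V} (h : NoCore G) :
    ∃ o : V → V → Prop, IsOrientation G o ∧ ∃ c : V → Fin 3, ∀ u v, o u v → c u < c v := by
  classical
  obtain ⟨r, I, c, h1, h2, h3, h4, h5⟩ := h.struct_aux _ Finset.univ rfl
  refine ⟨fun u w => G.Adj u w ∧ c u < c w, ⟨fun u w h => h.1, ?_⟩, c, fun u w h => h.2⟩
  intro u w huw
  have := h5 u (Finset.mem_univ _) w (Finset.mem_univ _) huw
  have h6 := huw.symm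
  simp only [huw, h6, true_and]
  omega

theorem ncard_le_of_copy {V β : Type*} [Finite V] {A : Set β} {B : Set V} (f : β → V) (hf : Function.Injective f)
    (h : ∀ x ∈ A, f x ∈ B) : A.ncard ≤ B.ncard := by
  rw [← Set.ncard_image_of_injective A hf]
  refine Set.ncard_le_ncard ?_ (Set.toFinite _)
  rintro _ ⟨x, hx, rfl⟩
  exact h x hx

theorem NoCore.not_arrows {V : Type*} [Fintype V] {G : SimpleGraph V} (h : NoCore G) {m : ℕ}
    (T : Fin m → Fin m → Prop) (hT : ∀ x y, T x y → ¬ T y x) (ha : 3 ≤ treeParam T) : ¬ Arrows G T := by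
  classical
  intro hA
  unfold treeParam at ha
  rcases le_max_iff.1 ha with hh | hd
  · obtain ⟨o, ho, c, hc⟩ := h.colour
    obtain ⟨f, hf, hfo⟩ := hA o ho
    have hne : {k : ℕ | ∃ f : Fin (k + 1) → Fin m, Function.Injective f ∧
      ∀ i : Fin k, T (f i.castSucc) (f i.succ)}.Nonempty := by
      by_contra hcon
      rw [Set.not_nonempty_iff_eq_empty] at hcon
      unfold dirHeight at hh
      rw [hcon] at hh
      simp at hh
    have hbd : BddAbove {k : ℕ | ∃ f : Fin (k + 1) → Fin m, Function.Injective f ∧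
      ∀ i : Fin k, T (f i.castSucc) (f i.succ)} := by
      refine ⟨m, ?_⟩
      rintro k ⟨g, hg, _⟩
      have := Fintype.card_le_of_injective g hg
      simp at this
      omega
    obtain ⟨g, hg, hgT⟩ := Nat.sSup_mem hne hbd
    change 3 ≤ sSup _ at hh
    generalize sSup {k : ℕ | ∃ f : Fin (k + 1) → Fin m, Function.Injective f ∧
      ∀ i : Fin k, T (f i.castSucc) (f i.succ)} = k at *
    have e0 := hc _ _ (hfo _ _ (hgT ⟨0, by omega⟩))
    have e1 := hc _ _ (hfo _ _ (hgT ⟨1, by omega⟩))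
    have e2 := hc _ _ (hfo _ _ (hgT ⟨2, by omega⟩))
    simp only [Fin.castSucc_mk, Fin.succ_mk] at e0 e1 e2
    simp only [Fin.lt_def] at e0 e1 e2
    have h3 := (c (f (g ⟨2 + 1, by omega⟩))).2
    simp at e0 e1 e2 h3
    omega
  · unfold maxDeg at hd
    have hne : {d : ℕ | ∃ v, d = ((SimpleGraph.fromRel T).neighborSet v).ncard}.Nonempty := by
      by_contra hcon
      rw [Set.not_nonempty_iff_eq_empty] at hcon
      rw [hcon] at hd
      simp at hd
    have hbd : BddAbove {d : ℕ | ∃ v, d = ((SimpleGraph.fromRel T).neighborSet v).ncard} := by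
      refine ⟨m, ?_⟩
      rintro k ⟨g, rfl⟩
      have := Set.ncard_le_card ((SimpleGraph.fromRel T).neighborSet g)
      simpa using this
    obtain ⟨v, hv⟩ := Nat.sSup_mem hne hbd
    rw [hv] at hd
    have hsub : ((SimpleGraph.fromRel T).neighborSet v) ⊆ {w | T v w} ∪ {w | T w v} := by
      intro w hw
      simp only [SimpleGraph.mem_neighborSet, SimpleGraph.fromRel_adj] at hw
      exact hw.2
    have hle := (Set.ncard_le_ncard hsub (Set.toFinite _)).trans (Set.ncard_union_le _ _)
    by_cases c1 : 3 ≤ {w | T v w}.ncard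
    · obtain ⟨o, ho, hdeg⟩ := h.outdeg
      obtain ⟨f, hf, hfo⟩ := hA o ho
      have := ncard_le_of_copy (A := {w | T v w}) (B := {w | o (f v) w}) f hf (fun x hx => hfo _ _ hx)
      have := hdeg (f v)
      omega
    by_cases c2 : 3 ≤ {w | T w v}.ncard
    · obtain ⟨o, ho, hdeg⟩ := h.outdeg
      obtain ⟨f, hf, hfo⟩ := hA _ (isOrientation_rev ho)
      have := ncard_le_of_copy (A := {w | T w v}) (B := {w | o (f v) w}) f hf (fun x hx => hfo _ _ hx)
      have := hdeg (f v)
      omega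
    by_cases c3 : 2 ≤ {w | T v w}.ncard
    · obtain ⟨o, ho, hdeg⟩ := h.mixed
      obtain ⟨f, hf, hfo⟩ := hA o ho
      have h6 := ncard_le_of_copy (A := {w | T v w}) (B := {w | o (f v) w}) f hf (fun x hx => hfo _ _ hx)
      obtain ⟨u, hu⟩ : {w | T w v}.Nonempty := by
        apply Set.nonempty_of_ncard_ne_zero; omega
      have := hdeg (f v) ⟨f u, hfo _ _ hu⟩
      omega
    · obtain ⟨o, ho, hdeg⟩ := h.mixed
      obtain ⟨f, hf, hfo⟩ := hA _ (isOrientation_rev ho)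
      have h6 := ncard_le_of_copy (A := {w | T w v}) (B := {w | o (f v) w}) f hf (fun x hx => hfo _ _ hx)
      obtain ⟨u, hu⟩ : {w | T v w}.Nonempty := by
        apply Set.nonempty_of_ncard_ne_zero; omega
      have := hdeg (f v) ⟨f u, hfo _ _ hu⟩
      omega


/-- ordered cherries -/
def cherries (n : ℕ) : Finset (Fin n × Fin n × Fin n) :=
  Finset.univ.filter (fun i => i.1 ≠ i.2.1 ∧ i.1 ≠ i.2.2 ∧ i.2.1 ≠ i.2.2)

/-- edges of a cherry -/
def chE {n : ℕ} (i : Fin n × Fin n × Fin n) : Finset (Sym2 (Fin n)) := {s(i.1, i.2.1), s(i.1, i.2.2)}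

theorem chE_card {n : ℕ} {i : Fin n × Fin n × Fin n} (hi : i ∈ cherries n) : (chE i).card = 2 := by
  obtain ⟨v, a, b⟩ := i
  simp only [cherries, Finset.mem_filter] at hi
  unfold chE
  rw [Finset.card_pair]
  simp only [ne_eq, Sym2.eq_iff]
  tauto

theorem chE_sub {n : ℕ} {i : Fin n × Fin n × Fin n} (hi : i ∈ cherries n) : chE i ⊆ ES Finset.univ := by
  obtain ⟨v, a, b⟩ := i
  simp only [cherries, Finset.mem_filter] at hi
  intro e he
  simp only [chE, Finset.mem_insert, Finset.mem_singleton] at he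
  rcases he with rfl | rfl
  · rw [mem_ES]; simp; tauto
  · rw [mem_ES]; simp; tauto

open Classical in
theorem card_share (n : ℕ) : (((cherries n) ×ˢ (cherries n)).filter
    (fun ij => ¬ Disjoint (chE ij.1) (chE ij.2))).card ≤ 8 * n ^ 4 := by
  let φ : (Bool × Bool × Bool) × (Fin n × Fin n × Fin n × Fin n) →
      (Fin n × Fin n × Fin n) × (Fin n × Fin n × Fin n) := fun q =>
    let v := q.2.1
    let a := q.2.2.1
    let b := q.2.2.2.1
    let c := q.2.2.2.2
    let x := if q.1.1 then a else b
    let v' := if q.1.2.1 then v else x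
    let y := if q.1.2.1 then x else v
    ((v, a, b), if q.1.2.2 then (v', y, c) else (v', c, y))
  have hsub : (((cherries n) ×ˢ (cherries n)).filter
    (fun ij => ¬ Disjoint (chE ij.1) (chE ij.2))) ⊆ Finset.univ.image φ := by
    rintro ⟨⟨v, a, b⟩, ⟨v', a', b'⟩⟩ h
    simp only [Finset.mem_filter, Finset.not_disjoint_iff] at h
    obtain ⟨-, e, h1, h2⟩ := h
    simp only [chE, Finset.mem_insert, Finset.mem_singleton] at h1 h2
    simp only [Finset.mem_image, Finset.mem_univ, true_and]
    rcases h1 with rfl | rfl <;> rcases h2 with h2 | h2 <;>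
      rcases Sym2.eq_iff.1 h2 with ⟨rfl, rfl⟩ | ⟨rfl, rfl⟩
    · exact ⟨((true, true, true), (v, a, b, b')), rfl⟩
    · exact ⟨((true, false, true), (v, a, b, b')), rfl⟩
    · exact ⟨((true, true, false), (v, a, b, a')), rfl⟩
    · exact ⟨((true, false, false), (v, a, b, a')), rfl⟩
    · exact ⟨((false, true, true), (v, a, b, b')), rfl⟩
    · exact ⟨((false, false, true), (v, a, b, b')), rfl⟩
    · exact ⟨((false, true, false), (v, a, b, a')), rfl⟩
    · exact ⟨((false, false, false), (v, a, b, a')), rfl⟩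
  refine (Finset.card_le_card hsub).trans (Finset.card_image_le.trans ?_)
  simp only [Finset.card_univ, Fintype.card_prod, Fintype.card_bool, Fintype.card_fin]
  apply le_of_eq
  ring

open Classical in
theorem card_same (n : ℕ) : (((cherries n) ×ˢ (cherries n)).filter
    (fun ij => chE ij.2 ⊆ chE ij.1)).card ≤ 27 * n ^ 3 := by
  let sel : Fin 3 → Fin n × Fin n × Fin n → Fin n := fun k i => ![i.1, i.2.1, i.2.2] k
  let φ : (Fin 3 × Fin 3 × Fin 3) × (Fin n × Fin n × Fin n) →
      (Fin n × Fin n × Fin n) × (Fin n × Fin n × Fin n) := fun q =>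
    (q.2, (sel q.1.1 q.2, sel q.1.2.1 q.2, sel q.1.2.2 q.2))
  have hsub : (((cherries n) ×ˢ (cherries n)).filter
    (fun ij => chE ij.2 ⊆ chE ij.1)) ⊆ Finset.univ.image φ := by
    rintro ⟨⟨v, a, b⟩, ⟨v', a', b'⟩⟩ h
    simp only [Finset.mem_filter] at h
    obtain ⟨-, h⟩ := h
    have h1 := h (show s(v', a') ∈ _ by simp [chE])
    have h2 := h (show s(v', b') ∈ _ by simp [chE])
    simp only [chE, Finset.mem_insert, Finset.mem_singleton, Sym2.eq_iff] at h1 h2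
    have hv : ∃ k, sel k (v, a, b) = v' := by
      have : v' = v ∨ v' = a ∨ v' = b := by tauto
      rcases this with rfl | rfl | rfl
      · exact ⟨0, rfl⟩
      · exact ⟨1, rfl⟩
      · exact ⟨2, rfl⟩
    have ha : ∃ k, sel k (v, a, b) = a' := by
      have : a' = v ∨ a' = a ∨ a' = b := by tauto
      rcases this with rfl | rfl | rfl
      · exact ⟨0, rfl⟩
      · exact ⟨1, rfl⟩
      · exact ⟨2, rfl⟩
    have hb : ∃ k, sel k (v, a, b) = b' := by
      have : b' = v ∨ b' = a ∨ b' = b := by tauto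
      rcases this with rfl | rfl | rfl
      · exact ⟨0, rfl⟩
      · exact ⟨1, rfl⟩
      · exact ⟨2, rfl⟩
    obtain ⟨k1, hk1⟩ := hv
    obtain ⟨k2, hk2⟩ := ha
    obtain ⟨k3, hk3⟩ := hb
    simp only [Finset.mem_image, Finset.mem_univ, true_and]
    refine ⟨((k1, k2, k3), (v, a, b)), ?_⟩
    simp only [φ, hk1, hk2, hk3]
  refine (Finset.card_le_card hsub).trans (Finset.card_image_le.trans ?_)
  simp only [Finset.card_univ, Fintype.card_prod, Fintype.card_fin]
  apply le_of_eq
  ring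

open Classical in
/-- number of ordered cherries -/
noncomputable def chX {n : ℕ} (G : SimpleGraph (Fin n)) : ℝ :=
  ∑ i ∈ cherries n, if ((chE i : Finset (Sym2 (Fin n))) : Set (Sym2 (Fin n))) ⊆ G.edgeSet then 1 else 0

theorem Ex_chX (n : ℕ) (p : ℝ) : Ex n p chX = (cherries n).card * p ^ 2 := by
  classical
  unfold chX
  rw [Ex_sum]
  rw [Finset.sum_congr rfl (g := fun _ => p ^ 2)]
  · simp
  · intro i hi
    rw [Ex_subset n p _ (chE_sub hi), chE_card hi]

theorem Ex_chX_sq {n : ℕ} {p : ℝ} (h0 : 0 ≤ p) (h1 : p ≤ 1) :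
    Ex n p (fun G => chX G ^ 2) ≤ ((cherries n).card * p ^ 2) ^ 2 + 8 * n ^ 4 * p ^ 3 + 27 * n ^ 3 * p ^ 2 := by
  classical
  have e1 : ∀ G : SimpleGraph (Fin n), chX G ^ 2 = ∑ ij ∈ (cherries n) ×ˢ (cherries n),
      if ((chE ij.1 ∪ chE ij.2 : Finset (Sym2 (Fin n))) : Set (Sym2 (Fin n))) ⊆ G.edgeSet then (1:ℝ) else 0 := by
    intro G
    unfold chX
    rw [sq, Finset.sum_mul_sum, ← Finset.sum_product']
    refine Finset.sum_congr rfl fun ij _ => ?_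
    rw [Finset.coe_union, Set.union_subset_iff]
    by_cases h1 : ((chE ij.1 : Finset (Sym2 (Fin n))) : Set (Sym2 (Fin n))) ⊆ G.edgeSet <;>
    by_cases h2 : ((chE ij.2 : Finset (Sym2 (Fin n))) : Set (Sym2 (Fin n))) ⊆ G.edgeSet <;> simp [h1, h2]
  simp_rw [e1]
  rw [Ex_sum]
  have e2 : ∀ ij ∈ (cherries n) ×ˢ (cherries n),
      Ex n p (fun G => if ((chE ij.1 ∪ chE ij.2 : Finset (Sym2 (Fin n))) : Set (Sym2 (Fin n))) ⊆ G.edgeSet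
        then (1:ℝ) else 0) ≤ p ^ 4 + (if ¬ Disjoint (chE ij.1) (chE ij.2) then p ^ 3 else 0) +
          (if chE ij.2 ⊆ chE ij.1 then p ^ 2 else 0) := by
    intro ij hij
    rw [Finset.mem_product] at hij
    rw [Ex_subset n p _ (Finset.union_subset (chE_sub hij.1) (chE_sub hij.2))]
    have c1 := chE_card hij.1
    have c2 := chE_card hij.2
    have p4 : 0 ≤ p ^ 4 := by positivity
    have p3 : 0 ≤ p ^ 3 := by positivity
    have p2 : 0 ≤ p ^ 2 := by positivity
    by_cases hd : Disjoint (chE ij.1) (chE ij.2)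
    · rw [Finset.card_union_of_disjoint hd, c1, c2, show 2 + 2 = 4 from rfl]
      simp only [hd, not_true_eq_false, if_false]
      split_ifs <;> linarith
    · by_cases hs : chE ij.2 ⊆ chE ij.1
      · rw [Finset.union_eq_left.2 hs, c1]
        simp only [hd, hs, not_false_eq_true, if_true]
        linarith
      · simp only [hd, hs, not_false_eq_true, if_true, if_false]
        have : 3 ≤ (chE ij.1 ∪ chE ij.2).card := by
          have : (chE ij.1).card < (chE ij.1 ∪ chE ij.2).card := by
            apply Finset.card_lt_card
            refine ⟨Finset.subset_union_left, fun h => hs (Finset.subset_union_right.trans h)⟩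
          omega
        have := pow_le_pow_of_le_one h0 h1 this
        linarith
  refine (Finset.sum_le_sum e2).trans ?_
  rw [Finset.sum_add_distrib, Finset.sum_add_distrib, ← Finset.sum_filter, ← Finset.sum_filter]
  simp only [Finset.sum_const, Finset.card_product, nsmul_eq_mul]
  have s1 : ((((cherries n) ×ˢ (cherries n)).filter
    (fun ij => ¬ Disjoint (chE ij.1) (chE ij.2))).card : ℝ) ≤ 8 * n ^ 4 := by exact_mod_cast card_share n
  have s2 : ((((cherries n) ×ˢ (cherries n)).filter
    (fun ij => chE ij.2 ⊆ chE ij.1)).card : ℝ) ≤ 27 * n ^ 3 := by exact_mod_cast card_same n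
  have s1' := mul_le_mul_of_nonneg_right s1 (show 0 ≤ p ^ 3 by positivity)
  have s2' := mul_le_mul_of_nonneg_right s2 (show 0 ≤ p ^ 2 by positivity)
  push_cast
  have : ((cherries n).card * p ^ 2) ^ 2 = ((cherries n).card : ℝ) * (cherries n).card * p ^ 4 := by ring
  rw [this]
  linarith

theorem cherries_card_le (n : ℕ) : ((cherries n).card : ℝ) ≤ n ^ 3 := by
  have : (cherries n).card ≤ n ^ 3 := by
    refine (Finset.card_le_univ _).trans (le_of_eq ?_)
    simp only [Fintype.card_prod, Fintype.card_fin]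
    ring
  exact_mod_cast this

theorem prob_cherry {n : ℕ} {b : ℝ} (hb : 0 < b) (hb1 : b ≤ 1.005) (hn : 2 ≤ n) :
    probGnp n (b / n) (fun G => 1.02 * (n : ℝ) ≤ chX G) ≤ 1000000 / n := by
  have hn0 : (0 : ℝ) < n := by positivity
  have h0 : 0 ≤ b / n := by positivity
  have h1 : b / n ≤ 1 := by
    rw [div_le_one hn0]
    have : (2 : ℝ) ≤ n := by exact_mod_cast hn
    linarith
  set μ : ℝ := (cherries n).card * (b / n) ^ 2 with hμ
  have hμn : μ ≤ b ^ 2 * n := by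
    have := mul_le_mul_of_nonneg_right (cherries_card_le n) (show 0 ≤ (b / n) ^ 2 by positivity)
    refine this.trans (le_of_eq ?_)
    field_simp
  have hμn' : μ ≤ 1.0101 * n := by
    refine hμn.trans ?_
    apply mul_le_mul_of_nonneg_right _ hn0.le
    nlinarith
  have hstep : probGnp n (b / n) (fun G => 1.02 * (n : ℝ) ≤ chX G) ≤
      Ex n (b / n) (fun G => (1 / (0.0099 * n) ^ 2) * ((chX G ^ 2) + ((-2 * μ) * chX G + μ ^ 2 * 1))) := by
    refine prob_le_Ex h0 h1 _ _ ?_ ?_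
    · intro G
      have : (chX G ^ 2) + ((-2 * μ) * chX G + μ ^ 2 * 1) = (chX G - μ) ^ 2 := by ring
      rw [this]; positivity
    · intro G hG
      have : (chX G ^ 2) + ((-2 * μ) * chX G + μ ^ 2 * 1) = (chX G - μ) ^ 2 := by ring
      rw [this, one_div, inv_mul_eq_div, one_le_div (by positivity)]
      apply pow_le_pow_left₀ (by positivity)
      linarith
  refine hstep.trans ?_
  rw [Ex_mul, Ex_add, Ex_add, Ex_mul, Ex_mul, Ex_one, show (Ex n (b/n) fun G => chX G) = μ from Ex_chX n _]
  have h2 := Ex_chX_sq (n := n) h0 h1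
  rw [← hμ] at h2
  have h3 : 8 * (n:ℝ) ^ 4 * (b / n) ^ 3 + 27 * n ^ 3 * (b / n) ^ 2 = (8 * b ^ 3 + 27 * b ^ 2) * n := by
    field_simp
  have h4 : 8 * b ^ 3 + 27 * b ^ 2 ≤ 40 := by
    have : b ^ 2 ≤ 1.02 := by nlinarith
    have : b ^ 3 ≤ 1.03 := by
      have : b ^ 3 = b ^ 2 * b := by ring
      nlinarith
    linarith
  have h5 : (Ex n (b / n) fun G => chX G ^ 2) + (-2 * μ * μ + μ ^ 2 * 1) ≤ 40 * n := by
    have := mul_le_mul_of_nonneg_right h4 hn0.le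
    nlinarith
  refine (mul_le_mul_of_nonneg_left h5 (by positivity)).trans ?_
  rw [show 1 / (0.0099 * (n:ℝ)) ^ 2 * (40 * n) = (40 / 0.0099 ^ 2) / n by field_simp]
  apply div_le_div_of_nonneg_right _ hn0.le
  norm_num


open Classical in
/-- number of edges inside `S` -/
noncomputable def eIn {V : Type*} (G : SimpleGraph V) (S : Finset V) : ℕ :=
  ((ES S).filter (· ∈ G.edgeSet)).card

open Classical in
theorem core_edges {V : Type*} (G : SimpleGraph V) (S : Finset V)
    (h : ∀ v ∈ S, 3 ≤ (S.filter (fun w => G.Adj v w)).card) : 3 * S.card ≤ 2 * eIn G S := by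
  have h1 : 3 * S.card ≤ (S.sigma (fun v => S.filter (fun w => G.Adj v w))).card := by
    rw [Finset.card_sigma, mul_comm]
    exact Finset.card_nsmul_le_sum _ _ _ h
  have h2 := Finset.card_le_mul_card_image_of_maps_to
    (s := S.sigma (fun v => S.filter (fun w => G.Adj v w)))
    (t := (ES S).filter (· ∈ G.edgeSet)) (f := fun x => s(x.1, x.2)) ?_ 2 ?_
  · unfold eIn
    omega
  · rintro ⟨x, y⟩ hx
    simp only [Finset.mem_sigma, Finset.mem_filter] at hx
    simp only [Finset.mem_filter, mem_ES, SimpleGraph.mem_edgeSet]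
    exact ⟨⟨hx.1, hx.2.1, hx.2.2.ne⟩, hx.2.2⟩
  · intro e he
    induction e using Sym2.ind with
    | _ x y =>
      refine (Finset.card_le_card (t := {(⟨x, y⟩ : (_ : V) × V), ⟨y, x⟩}) ?_).trans Finset.card_le_two
      rintro ⟨u, w⟩ hu
      simp only [Finset.mem_filter, Sym2.eq_iff] at hu
      rcases hu.2 with ⟨rfl, rfl⟩ | ⟨rfl, rfl⟩ <;> simp

open Classical in
theorem core_cherries {n : ℕ} (G : SimpleGraph (Fin n)) (S : Finset (Fin n))
    (h : ∀ v ∈ S, 3 ≤ (S.filter (fun w => G.Adj v w)).card) : 6 * (S.card : ℝ) ≤ chX G := by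
  have h1 : 6 * S.card ≤ (S.sigma (fun v => (S.filter (fun w => G.Adj v w)).offDiag)).card := by
    rw [Finset.card_sigma, mul_comm]
    rw [← smul_eq_mul]
    apply Finset.card_nsmul_le_sum
    intro v hv
    rw [Finset.offDiag_card]
    have := h v hv
    generalize (S.filter (fun w => G.Adj v w)).card = d at *
    have : d * 3 ≤ d * d := Nat.mul_le_mul_left d this
    omega
  have h2 : (S.sigma (fun v => (S.filter (fun w => G.Adj v w)).offDiag)).card ≤
      ((cherries n).filter (fun i => ((chE i : Finset (Sym2 (Fin n))) : Set (Sym2 (Fin n))) ⊆ G.edgeSet)).card := by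
    refine Finset.card_le_card_of_injOn (fun x => (x.1, x.2.1, x.2.2)) ?_ ?_
    · rintro ⟨v, a, b⟩ hx
      simp only [Finset.coe_sigma, Set.mem_sigma_iff, Finset.mem_coe, Finset.mem_offDiag, Finset.mem_filter] at hx
      simp only [Finset.mem_coe, Finset.mem_filter, cherries, Finset.mem_univ, true_and]
      obtain ⟨hv, ⟨ha, hva⟩, ⟨hb, hvb⟩, hab⟩ := hx
      refine ⟨⟨hva.ne, hvb.ne, hab⟩, ?_⟩
      intro e he
      simp only [chE, Finset.coe_insert, Finset.coe_singleton, Set.mem_insert_iff, Set.mem_singleton_iff] at he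
      rcases he with rfl | rfl
      · exact hva
      · exact hvb
    · rintro ⟨v, a, b⟩ _ ⟨v', a', b'⟩ _ h
      simp only [Prod.mk.injEq] at h
      obtain ⟨rfl, rfl, rfl⟩ := h
      rfl
  have h3 : chX G = (((cherries n).filter (fun i => ((chE i : Finset (Sym2 (Fin n))) : Set (Sym2 (Fin n))) ⊆ G.edgeSet)).card : ℝ) := by
    unfold chX
    rw [Finset.sum_boole]
  rw [h3]
  exact_mod_cast h1.trans h2

/-- first moment bound for dense small subsets; `k s` is the number of edges, `I` the allowed sizes. -/
theorem prob_dense {n : ℕ} {p : ℝ} (h0 : 0 ≤ p) (h1 : p ≤ 1) (I : ℕ → Prop) [DecidablePred I] (k : ℕ → ℕ) :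
    probGnp n p (fun G => ∃ S : Finset (Fin n), I S.card ∧ k S.card ≤ eIn G S) ≤
      ∑ s ∈ Finset.range (n + 1), if I s then (n.choose s : ℝ) * ((s.choose 2).choose (k s) * p ^ (k s)) else 0 := by
  classical
  have hstep := prob_le_Ex h0 h1 (fun G => ∃ S : Finset (Fin n), I S.card ∧ k S.card ≤ eIn G S)
    (fun G => ∑ S ∈ (Finset.univ : Finset (Fin n)).powerset.filter (fun S => I S.card),
      ∑ F ∈ (ES S).powersetCard (k S.card), if (F : Set (Sym2 (Fin n))) ⊆ G.edgeSet then (1:ℝ) else 0) ?_ ?_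
  · refine hstep.trans ?_
    rw [Ex_sum]
    rw [Finset.sum_congr rfl (g := fun S => (((S.card).choose 2).choose (k S.card) : ℝ) * p ^ (k S.card))]
    · rw [Finset.sum_filter]
      rw [Finset.sum_powerset_apply_card (fun s => if I s then ((s.choose 2).choose (k s) : ℝ) * p ^ (k s) else 0)]
      rw [Finset.card_univ, Fintype.card_fin]
      apply le_of_eq
      refine Finset.sum_congr rfl fun s _ => ?_
      split_ifs <;> simp
    · intro S _
      rw [Ex_sum]
      rw [Finset.sum_congr rfl (g := fun _ => p ^ (k S.card))]
      · rw [Finset.sum_const, Finset.card_powersetCard, ES_card, nsmul_eq_mul]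
      · intro F hF
        rw [Finset.mem_powersetCard] at hF
        rw [Ex_subset n p F (hF.1.trans (ES_mono (Finset.subset_univ _))), hF.2]
  · intro G
    exact Finset.sum_nonneg fun S _ => Finset.sum_nonneg fun F _ => by split_ifs <;> norm_num
  · rintro G ⟨S, hS, hk⟩
    obtain ⟨F, hF, hFc⟩ := Finset.exists_subset_card_eq hk
    have nn : ∀ S : Finset (Fin n), 0 ≤ ∑ F ∈ (ES S).powersetCard (k S.card), if (F : Set (Sym2 (Fin n))) ⊆ G.edgeSet then (1:ℝ) else 0 := by
      intro S
      exact Finset.sum_nonneg fun F _ => by split_ifs <;> norm_num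
    have hSm : S ∈ (Finset.univ : Finset (Fin n)).powerset.filter (fun S => I S.card) := by simp [hS]
    refine le_trans ?_ (Finset.single_le_sum (fun S _ => nn S) hSm)
    have hFm : F ∈ (ES S).powersetCard (k S.card) :=
      Finset.mem_powersetCard.2 ⟨hF.trans (Finset.filter_subset _ _), hFc⟩
    refine le_trans ?_ (Finset.single_le_sum (fun F _ => by split_ifs <;> norm_num) hFm)
    rw [if_pos]
    intro e he
    exact (Finset.mem_filter.1 (hF he)).2

theorem choose_bound (N k : ℕ) (q : ℝ) (hq : 0 ≤ q) :
    (N.choose k : ℝ) * q ^ k ≤ (Real.exp 1 * N * q / k) ^ k := by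
  rcases Nat.eq_zero_or_pos k with rfl | hk
  · simp
  have h1 : (N.choose k : ℝ) ≤ N ^ k / k.factorial := Nat.choose_le_pow_div k N
  have h2 : (k : ℝ) ^ k / k.factorial ≤ Real.exp k := Real.pow_div_factorial_le_exp _ (by positivity) _
  have h3 : Real.exp k = Real.exp 1 ^ k := by rw [← Real.exp_nat_mul, mul_one]
  have hk0 : (0:ℝ) < k := by exact_mod_cast hk
  have hf : (0:ℝ) < k.factorial := by exact_mod_cast Nat.factorial_pos k
  have h4 : (1:ℝ) / k.factorial ≤ Real.exp 1 ^ k / k ^ k := by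
    rw [h3] at h2
    rw [div_le_div_iff₀ hf (by positivity)]
    rw [div_le_iff₀ hf] at h2
    linarith
  calc (N.choose k : ℝ) * q ^ k ≤ N ^ k / k.factorial * q ^ k := by gcongr
    _ = (N ^ k * q ^ k) * (1 / k.factorial) := by ring
    _ ≤ (N ^ k * q ^ k) * (Real.exp 1 ^ k / k ^ k) := by gcongr
    _ = _ := by rw [div_pow, mul_pow, mul_pow]; ring

theorem term_bound {n s : ℕ} {b : ℝ} (hb : 0 < b) (hb1 : b ≤ 1.005) (hs : 1 ≤ s) (hsn : (s : ℝ) ≤ 0.17 * n) :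
    (n.choose s : ℝ) * ((s.choose 2).choose ((3 * s + 1) / 2) * (b / n) ^ ((3 * s + 1) / 2)) ≤
      Real.sqrt (5.6 * s / n) ^ s := by
  set k := (3 * s + 1) / 2 with hk
  have hs0 : (0:ℝ) < s := by exact_mod_cast hs
  have hn0 : (0:ℝ) < n := by
    by_contra h
    push Not at h
    linarith
  have hk2 : (3:ℝ) * s ≤ 2 * k := by
    have : 3 * s ≤ 2 * k := by omega
    exact_mod_cast this
  have hk0 : (0:ℝ) < k := by linarith
  have he := Real.exp_one_lt_d9
  have he0 := Real.exp_pos 1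
  set E := Real.exp 1 with hE
  have h1 : (n.choose s : ℝ) ≤ (E * n / s) ^ s := by
    have := choose_bound n s 1 zero_le_one
    simpa using this
  set y : ℝ := E * s * b / (3 * n) with hy
  have hy0 : 0 ≤ y := by positivity
  have h2 : ((s.choose 2).choose k : ℝ) * (b / n) ^ k ≤ y ^ k := by
    refine (choose_bound (s.choose 2) k (b / n) (by positivity)).trans ?_
    apply pow_le_pow_left₀ (by positivity)
    have hc : ((s.choose 2 : ℕ) : ℝ) ≤ s ^ 2 / 2 := by
      have := Nat.choose_le_pow_div (α := ℝ) 2 s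
      simpa using this
    rw [hy, div_le_div_iff₀ hk0 (by positivity)]
    calc E * (s.choose 2 : ℕ) * (b / n) * (3 * n) = 3 * E * b * (s.choose 2 : ℕ) := by field_simp
      _ ≤ 3 * E * b * (s ^ 2 / 2) := by gcongr
      _ = (E * b * s / 2) * (3 * s) := by ring
      _ ≤ (E * b * s / 2) * (2 * k) := by gcongr
      _ = _ := by ring
  have hy1 : y ≤ 1 := by
    rw [hy, div_le_one (by positivity)]
    have : E * s * b ≤ 2.72 * (0.17 * n) * 1.005 := by gcongr; linarith
    linarith
  have h3 : (y ^ k) ^ 2 ≤ (y ^ 3) ^ s := by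
    rw [← pow_mul, ← pow_mul]
    apply pow_le_pow_of_le_one hy0 hy1
    omega
  have h4 : (E * n / s) ^ 2 * y ^ 3 ≤ 5.6 * s / n := by
    have : (E * n / s) ^ 2 * y ^ 3 = (E ^ 5 * b ^ 3 / 27) * (s / n) := by
      rw [hy]; field_simp; ring
    rw [this, mul_div_assoc 5.6]
    apply mul_le_mul_of_nonneg_right _ (by positivity)
    have : E ^ 5 * b ^ 3 ≤ 2.7182818286 ^ 5 * 1.005 ^ 3 := by gcongr
    rw [div_le_iff₀ (by norm_num)]
    refine this.trans ?_
    norm_num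
  have h5 : (n.choose s : ℝ) * ((s.choose 2).choose k * (b / n) ^ k) ≤ (E * n / s) ^ s * y ^ k := by
    gcongr
  refine h5.trans ?_
  refine (sq_le_sq₀ (by positivity) (by positivity)).1 ?_
  rw [mul_pow, ← pow_mul, mul_comm s 2, pow_mul, ← pow_mul _ s 2, mul_comm s 2, pow_mul,
    Real.sq_sqrt (by positivity)]
  calc ((E * n / s) ^ 2) ^ s * (y ^ k) ^ 2 ≤ ((E * n / s) ^ 2) ^ s * (y ^ 3) ^ s := by gcongr
    _ = ((E * n / s) ^ 2 * y ^ 3) ^ s := by rw [mul_pow]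
    _ ≤ _ := by gcongr

open Filter in
theorem sum_tendsto : Tendsto (fun n : ℕ => ∑' s : ℕ, if 1 ≤ s ∧ (s : ℝ) ≤ 0.17 * n then
    Real.sqrt (5.6 * s / n) ^ s else 0) atTop (nhds 0) := by
  have h := tendsto_tsum_of_dominated_convergence (𝓕 := atTop)
    (f := fun (n : ℕ) (s : ℕ) => if 1 ≤ s ∧ (s : ℝ) ≤ 0.17 * n then
      Real.sqrt (5.6 * s / n) ^ s else 0) (g := fun _ => (0:ℝ))
    (bound := fun s => (Real.sqrt 0.96) ^ s) ?_ ?_ ?_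
  · simpa using h
  · apply summable_geometric_of_lt_one (Real.sqrt_nonneg _)
    rw [Real.sqrt_lt' (by norm_num)]
    norm_num
  · intro s
    rcases Nat.eq_zero_or_pos s with rfl | hs
    · simp
    have h1 : Tendsto (fun n : ℕ => Real.sqrt (5.6 * s / n) ^ s) atTop (nhds 0) := by
      have h2 : Tendsto (fun n : ℕ => (5.6 * s / n : ℝ)) atTop (nhds 0) := tendsto_const_div_atTop_nhds_zero_nat _
      have h3 := ((Real.continuous_sqrt.tendsto _).comp h2).pow s
      simpa [hs.ne'] using h3
    refine squeeze_zero (fun n => ?_) (fun n => ?_) h1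
    · split_ifs
      · positivity
      · exact le_rfl
    · split_ifs
      · exact le_rfl
      · positivity
  · refine Eventually.of_forall fun n s => ?_
    split_ifs with h
    · rw [Real.norm_of_nonneg (by positivity)]
      apply pow_le_pow_left₀ (Real.sqrt_nonneg _)
      apply Real.sqrt_le_sqrt
      have hs0 : (0:ℝ) < s := by exact_mod_cast h.1
      have hn0 : (0:ℝ) < n := by
        by_contra h
        push Not at h
        linarith
      rw [div_le_iff₀ hn0]
      linarith
    · simp

open Filter in
theorem noCore_tendsto {b : ℝ} (hb : 0 < b) (hb1 : b ≤ 1.005) :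
    Tendsto (fun n : ℕ => probGnp n (b / n) (fun G => ¬ NoCore G)) atTop (nhds 0) := by
  classical
  have hlim : Tendsto (fun n : ℕ => (1000000 : ℝ) / n + ∑' s : ℕ, if 1 ≤ s ∧ (s : ℝ) ≤ 0.17 * n then
    Real.sqrt (5.6 * s / n) ^ s else 0) atTop (nhds 0) := by
    simpa using (tendsto_const_div_atTop_nhds_zero_nat (1000000:ℝ)).add sum_tendsto
  refine tendsto_of_tendsto_of_tendsto_of_le_of_le' tendsto_const_nhds hlim ?_ ?_
  · filter_upwards [eventually_ge_atTop 2] with n hn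
    have hn2 : (2 : ℝ) ≤ n := by exact_mod_cast hn
    exact prob_nonneg (by positivity) (by rw [div_le_one (by linarith)]; linarith) _
  · filter_upwards [eventually_ge_atTop 2] with n hn
    have hn2 : (2 : ℝ) ≤ n := by exact_mod_cast hn
    have h0 : 0 ≤ b / n := by positivity
    have h1 : b / n ≤ 1 := by rw [div_le_one (by linarith)]; linarith
    have hA := prob_cherry hb hb1 hn
    have hB := prob_dense (n := n) h0 h1 (fun s => 1 ≤ s ∧ (s : ℝ) ≤ 0.17 * n) (fun s => (3 * s + 1) / 2)
    have hC : probGnp n (b / n) (fun G => ¬ NoCore G) ≤ probGnp n (b / n) (fun G => 1.02 * (n : ℝ) ≤ chX G ∨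
      ∃ S : Finset (Fin n), (1 ≤ S.card ∧ (S.card : ℝ) ≤ 0.17 * n) ∧ (3 * S.card + 1) / 2 ≤ eIn G S) := by
      refine prob_mono h0 h1 fun G hG => ?_
      unfold NoCore at hG
      push Not at hG
      obtain ⟨S, hS, hdeg⟩ := hG
      by_cases hX : 1.02 * (n : ℝ) ≤ chX G
      · exact Or.inl hX
      · right
        push Not at hX
        have h6 := core_cherries G S (fun v hv => hdeg v hv)
        have h7 := core_edges G S (fun v hv => hdeg v hv)
        refine ⟨S, ⟨Finset.card_pos.2 hS, by linarith⟩, by omega⟩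
    refine hC.trans ((prob_or_le h0 h1).trans (add_le_add hA (hB.trans ?_)))
    have hterm : ∀ s ∈ Finset.range (n + 1), (if 1 ≤ s ∧ (s : ℝ) ≤ 0.17 * n then
        (n.choose s : ℝ) * ((s.choose 2).choose ((3 * s + 1) / 2) * (b / n) ^ ((3 * s + 1) / 2)) else 0) ≤
        (if 1 ≤ s ∧ (s : ℝ) ≤ 0.17 * n then Real.sqrt (5.6 * s / n) ^ s else 0) := by
      intro s _
      split_ifs with h
      · exact term_bound hb hb1 h.1 h.2
      · exact le_rfl
    refine (Finset.sum_le_sum hterm).trans ?_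
    apply le_of_eq
    symm
    apply tsum_eq_sum
    intro s hs
    rw [if_neg]
    rintro ⟨_, h⟩
    apply hs
    rw [Finset.mem_range]
    have : (s : ℝ) ≤ n := by linarith
    have : s ≤ n := by exact_mod_cast this
    omega


theorem exists_levels {m : ℕ} (T : Fin m → Fin m → Prop) (hT : ∀ x y, T x y → ¬ T y x)
    (htree : (SimpleGraph.fromRel T).IsTree) (a : ℕ) (ha : dirHeight T ≤ a) :
    ∃ l : Fin m → ℕ, (∀ x, l x ≤ a) ∧ ∀ x y, T x y → l x < l y := by
  classical
  set H := SimpleGraph.fromRel T with hH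
  have hadj : ∀ x y, T x y → H.Adj x y := by
    intro x y h
    rw [hH, SimpleGraph.fromRel_adj]
    refine ⟨?_, Or.inl h⟩
    rintro rfl
    exact hT _ _ h h
  let D : Fin m → Set ℕ := fun x => {k | ∃ u, ∃ w : H.Walk u x, w.IsPath ∧ w.length = k ∧
    ∀ d ∈ w.darts, T d.fst d.snd}
  have hD0 : ∀ x, (D x).Nonempty := fun x => ⟨0, x, SimpleGraph.Walk.nil, by simp, by simp, by simp⟩
  have hbd : BddAbove {k : ℕ | ∃ f : Fin (k + 1) → Fin m, Function.Injective f ∧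
      ∀ i : Fin k, T (f i.castSucc) (f i.succ)} := by
    refine ⟨m, ?_⟩
    rintro k ⟨g, hg, _⟩
    have := Fintype.card_le_of_injective g hg
    simp at this
    omega
  have hDa : ∀ x, ∀ k ∈ D x, k ≤ a := by
    rintro x k ⟨u, w, hw, rfl, hd⟩
    refine le_trans (le_csSup hbd ?_) ha
    refine ⟨fun i => w.getVert i, ?_, ?_⟩
    · intro i j hij
      have := hw.getVert_injOn (show (i : ℕ) ∈ _ from Nat.lt_succ_iff.1 i.2)
        (show (j : ℕ) ∈ _ from Nat.lt_succ_iff.1 j.2) hij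
      exact Fin.ext this
    · intro i
      have hi : (i : ℕ) < w.darts.length := by rw [SimpleGraph.Walk.length_darts]; exact i.2
      have := hd _ (List.getElem_mem hi)
      rw [SimpleGraph.Walk.darts_getElem_eq_getVert] at this
      simpa using this
  have hDb : ∀ x, BddAbove (D x) := fun x => ⟨a, fun k hk => hDa x k hk⟩
  refine ⟨fun x => sSup (D x), fun x => hDa x _ (Nat.sSup_mem (hD0 x) (hDb x)), ?_⟩
  intro x y hxy
  obtain ⟨u, w, hw, hl, hd⟩ := Nat.sSup_mem (hD0 x) (hDb x)
  apply Nat.lt_of_succ_le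
  apply le_csSup (hDb y)
  have hy : y ∉ w.support := by
    intro hy
    have hq : (SimpleGraph.Walk.cons (hadj _ _ hxy).symm SimpleGraph.Walk.nil : H.Walk y x).IsPath := by
      simp [(hadj _ _ hxy).ne']
    have := htree.isAcyclic.path_unique ⟨w.dropUntil y hy, hw.dropUntil hy⟩ ⟨_, hq⟩
    have h2 := congrArg Subtype.val this
    simp only at h2
    have h3 := w.darts_dropUntil_subset_darts hy
    rw [h2] at h3
    have h4 := hd ⟨(y, x), (hadj _ _ hxy).symm⟩ (h3 (by simp))
    exact hT _ _ hxy h4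
  refine ⟨u, w.concat (hadj _ _ hxy), ?_, ?_, ?_⟩
  · rw [SimpleGraph.Walk.concat_isPath_iff]
    exact ⟨hw, hy⟩
  · simp [hl]
  · intro d hdm
    rw [SimpleGraph.Walk.darts_concat, List.concat_eq_append, List.mem_append, List.mem_singleton] at hdm
    rcases hdm with h | rfl
    · exact hd d h
    · exact hxy

open Classical in
theorem card_le_eIn {V β : Type*} (G : SimpleGraph V) (A : Finset β) (f : β → V) (hf : Set.InjOn f A)
    (F : Finset (Sym2 β)) (hF : ∀ x y, s(x, y) ∈ F → x ∈ A ∧ y ∈ A ∧ G.Adj (f x) (f y)) :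
    F.card ≤ eIn G (A.image f) := by
  have hinj : Set.InjOn (Sym2.map f) (F : Set (Sym2 β)) := by
    intro e he e' he' h
    induction e using Sym2.ind with
    | _ x y =>
    induction e' using Sym2.ind with
    | _ z w =>
      obtain ⟨hx, hy, _⟩ := hF _ _ he
      obtain ⟨hz, hw, _⟩ := hF _ _ he'
      simp only [Sym2.map_mk, Sym2.eq_iff] at h ⊢
      rcases h with ⟨h1, h2⟩ | ⟨h1, h2⟩
      · exact Or.inl ⟨hf hx hz h1, hf hy hw h2⟩
      · exact Or.inr ⟨hf hx hw h1, hf hy hz h2⟩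
  rw [← Finset.card_image_of_injOn hinj]
  apply Finset.card_le_card
  intro e he
  obtain ⟨e', he', rfl⟩ := Finset.mem_image.1 he
  induction e' using Sym2.ind with
  | _ x y =>
    obtain ⟨hx, hy, hxy⟩ := hF _ _ he'
    simp only [Sym2.map_mk, Finset.mem_filter, mem_ES, SimpleGraph.mem_edgeSet]
    exact ⟨⟨Finset.mem_image_of_mem _ hx, Finset.mem_image_of_mem _ hy, hxy.ne⟩, hxy⟩

open Classical in
theorem embed_tree {V : Type*} {m : ℕ} (a : ℕ) (T : Fin m → Fin m → Prop) (hT : ∀ x y, T x y → ¬ T y x)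
    (htree : (SimpleGraph.fromRel T).IsTree)
    (hdeg : ∀ v, ((SimpleGraph.fromRel T).neighborSet v).ncard ≤ a)
    (l : Fin m → ℕ) (hla : ∀ x, l x ≤ a) (hl : ∀ x y, T x y → l x < l y)
    (G : SimpleGraph V) (o : V → V → Prop) (ho : IsOrientation G o) (U : ℕ → Finset V)
    (hne : ∀ i ≤ a, (U i).Nonempty)
    (hout : ∀ i j, i < j → j ≤ a → ∀ v ∈ U i, a ≤ ((U j).filter (fun w => o v w)).card)
    (hin : ∀ i j, i < j → j ≤ a → ∀ v ∈ U j, a ≤ ((U i).filter (fun w => o w v)).card)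
    (hsp : ∀ S : Finset V, (∀ v ∈ S, ∃ i ≤ a, v ∈ U i) → S.Nonempty → S.card ≤ m → eIn G S < S.card) :
    HasCopy o T := by
  obtain ⟨v0, hv0⟩ := hne 0 (Nat.zero_le _)
  set H := SimpleGraph.fromRel T with hH
  have key : ∀ k, k + 1 ≤ m → ∃ (A : Finset (Fin m)) (F : Finset (Sym2 (Fin m))) (f : Fin m → V),
      A.card = k + 1 ∧ F.card = k ∧ (∀ x y, s(x, y) ∈ F → H.Adj x y ∧ x ∈ A ∧ y ∈ A) ∧
      Set.InjOn f A ∧ (∀ x ∈ A, f x ∈ U (l x)) ∧ (∀ x y, s(x, y) ∈ F → T x y → o (f x) (f y)) := by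
    intro k
    induction k with
    | zero =>
      intro hk
      have x0 : Fin m := ⟨0, by omega⟩
      obtain ⟨v, hv⟩ := hne (l x0) (hla x0)
      exact ⟨{x0}, ∅, fun _ => v, by simp, by simp, by simp, by simp, by simpa using hv, by simp⟩
    | succ k ih =>
      intro hk
      obtain ⟨A, F, f, hA, hFc, hF, hf, hfU, hfo⟩ := ih (by omega)
      -- find a boundary edge
      obtain ⟨x0, hx0⟩ : A.Nonempty := Finset.card_pos.1 (by omega)
      obtain ⟨y0, hy0⟩ : ∃ y, y ∉ A := by
        by_contra hcon
        push Not at hcon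
        have : A = Finset.univ := Finset.eq_univ_iff_forall.2 hcon
        rw [this, Finset.card_univ, Fintype.card_fin] at hA
        omega
      obtain ⟨w⟩ := htree.connected.preconnected x0 y0
      obtain ⟨d, _, hx, hy⟩ := w.exists_boundary_dart (A : Set (Fin m)) hx0 hy0
      have hxy : H.Adj d.fst d.snd := d.adj
      generalize d.fst = x at *
      generalize d.snd = y at *
      have hx' : x ∈ A := hx
      have hy' : y ∉ A := hy
      have hxyT : T x y ∨ T y x := by
        rw [hH, SimpleGraph.fromRel_adj] at hxy
        exact hxy.2
      -- candidates
      obtain ⟨W, hWU, hWc, hWo⟩ : ∃ W : Finset V, W ⊆ U (l y) ∧ a ≤ W.card ∧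
          ∀ w ∈ W, (T x y → o (f x) w) ∧ (T y x → o w (f x)) := by
        rcases hxyT with h | h
        · refine ⟨_, Finset.filter_subset _ _, hout _ _ (hl _ _ h) (hla _) (f x) (hfU x hx'), ?_⟩
          intro w hw
          exact ⟨fun _ => (Finset.mem_filter.1 hw).2, fun h2 => absurd h2 (hT _ _ h)⟩
        · refine ⟨_, Finset.filter_subset _ _, hin _ _ (hl _ _ h) (hla _) (f x) (hfU x hx'), ?_⟩
          intro w hw
          exact ⟨fun h2 => absurd h2 (hT _ _ h), fun _ => (Finset.mem_filter.1 hw).2⟩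
      have hGadj : ∀ w ∈ W, G.Adj (f x) w := by
        intro w hw
        rcases hxyT with h | h
        · exact ho.1 _ _ ((hWo w hw).1 h)
        · exact (ho.1 _ _ ((hWo w hw).2 h)).symm
      have hFG : ∀ p q, s(p, q) ∈ F → p ∈ A ∧ q ∈ A ∧ G.Adj (f p) (f q) := by
        intro p q hpq
        obtain ⟨h1, h2, h3⟩ := hF p q hpq
        refine ⟨h2, h3, ?_⟩
        rw [hH, SimpleGraph.fromRel_adj] at h1
        rcases h1.2 with h | h
        · exact ho.1 _ _ (hfo _ _ hpq h)
        · rw [Sym2.eq_swap] at hpq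
          exact (ho.1 _ _ (hfo _ _ hpq h)).symm
      have hSc : (A.image f).card = k + 1 := by rw [Finset.card_image_of_injOn hf, hA]
      have hS := hsp (A.image f) (by
        intro v hv
        obtain ⟨z, hz, rfl⟩ := Finset.mem_image.1 hv
        exact ⟨l z, hla z, hfU z hz⟩) (Finset.card_pos.1 (by omega)) (by omega)
      have hused : ∀ z ∈ A, f z ∈ W → s(x, z) ∈ F := by
        intro z hz hzW
        by_contra hcon
        have h1 := card_le_eIn G A f hf (insert s(x, z) F) (by
          intro p q hpq
          rw [Finset.mem_insert] at hpq
          rcases hpq with h | h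
          · rcases Sym2.eq_iff.1 h with ⟨rfl, rfl⟩ | ⟨rfl, rfl⟩
            · exact ⟨hx', hz, hGadj _ hzW⟩
            · exact ⟨hz, hx', (hGadj _ hzW).symm⟩
          · exact hFG p q h)
        rw [Finset.card_insert_of_notMem hcon, hFc] at h1
        omega
      obtain ⟨w, hwW, hwA⟩ : ∃ w ∈ W, w ∉ A.image f := by
        by_contra hcon
        push Not at hcon
        have h1 : W ⊆ ((H.neighborSet x \ {y}).toFinset).image f := by
          intro w hw
          obtain ⟨z, hz, rfl⟩ := Finset.mem_image.1 (hcon w hw)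
          refine Finset.mem_image_of_mem _ ?_
          rw [Set.mem_toFinset]
          refine ⟨(hF _ _ (hused z hz hw)).1, ?_⟩
          rintro rfl
          exact hy' hz
        have h2 := (Finset.card_le_card h1).trans Finset.card_image_le
        rw [← Set.ncard_eq_toFinset_card'] at h2
        have h3 := Set.ncard_sdiff_singleton_lt_of_mem (show y ∈ H.neighborSet x from hxy)
        have h4 := hdeg x
        omega
      have hfz : ∀ z ∈ A, Function.update f y w z = f z := by
        intro z hz
        apply Function.update_of_ne
        rintro rfl
        exact hy' hz
      refine ⟨insert y A, insert s(x, y) F, Function.update f y w, ?_, ?_, ?_, ?_, ?_, ?_⟩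
      · rw [Finset.card_insert_of_notMem hy', hA]
      · rw [Finset.card_insert_of_notMem, hFc]
        intro h
        exact hy' (hF _ _ h).2.2
      · intro p q hpq
        rw [Finset.mem_insert] at hpq
        rcases hpq with h | h
        · rcases Sym2.eq_iff.1 h with ⟨rfl, rfl⟩ | ⟨rfl, rfl⟩
          · exact ⟨hxy, by simp [hx'], by simp⟩
          · exact ⟨hxy.symm, by simp, by simp [hx']⟩
        · obtain ⟨h1, h2, h3⟩ := hF p q h
          exact ⟨h1, by simp [h2], by simp [h3]⟩
      · intro p hp q hq hpq
        rw [Finset.coe_insert, Set.mem_insert_iff, Finset.mem_coe] at hp hq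
        rcases hp with rfl | hp <;> rcases hq with rfl | hq
        · rfl
        · rw [Function.update_self, hfz q hq] at hpq
          exact absurd (Finset.mem_image.2 ⟨q, hq, hpq.symm⟩) hwA
        · rw [Function.update_self, hfz p hp] at hpq
          exact absurd (Finset.mem_image.2 ⟨p, hp, hpq⟩) hwA
        · rw [hfz p hp, hfz q hq] at hpq
          exact hf hp hq hpq
      · intro p hp
        rw [Finset.mem_insert] at hp
        rcases hp with rfl | hp
        · rw [Function.update_self]; exact hWU hwW
        · rw [hfz p hp]; exact hfU p hp
      · intro p q hpq hpqT
        rw [Finset.mem_insert] at hpq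
        rcases hpq with h | h
        · rcases Sym2.eq_iff.1 h with ⟨rfl, rfl⟩ | ⟨rfl, rfl⟩
          · rw [Function.update_self, hfz p hx']
            exact (hWo w hwW).1 hpqT
          · rw [Function.update_self, hfz q hx']
            exact (hWo w hwW).2 hpqT
        · obtain ⟨h1, h2, h3⟩ := hF p q h
          rw [hfz p h2, hfz q h3]
          exact hfo p q h hpqT
  have hcard := htree.card_edgeFinset
  rw [Fintype.card_fin] at hcard
  obtain ⟨A, F, f, hA, hFc, hF, hf, hfU, hfo⟩ := key (m - 1) (by omega)
  have hAu : A = Finset.univ := by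
    rw [← Finset.card_eq_iff_eq_univ, Fintype.card_fin]; omega
  have hFu : F = H.edgeFinset := by
    apply Finset.eq_of_subset_of_card_le
    · intro e he
      induction e using Sym2.ind with
      | _ x y => rw [SimpleGraph.mem_edgeFinset]; exact (hF x y he).1
    · omega
  refine ⟨f, ?_, ?_⟩
  · rw [hAu, Finset.coe_univ] at hf
    exact Set.injOn_univ.1 hf
  · intro x y hxy
    apply hfo x y _ hxy
    rw [hFu, SimpleGraph.mem_edgeFinset, SimpleGraph.mem_edgeSet, hH, SimpleGraph.fromRel_adj]
    refine ⟨?_, Or.inl hxy⟩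
    rintro rfl
    exact hT _ _ hxy hxy


/-- between large subsets of `A` and `B` there is a pair in relation `r` -/
def DenseR {V : Type*} (r : V → V → Prop) (A B : Finset V) (s : ℕ) : Prop :=
  ∀ A' ⊆ A, ∀ B' ⊆ B, s ≤ A'.card → s ≤ B'.card → ∃ u ∈ A', ∃ v ∈ B', r u v

theorem DenseR.mono {V : Type*} {r : V → V → Prop} {A B A1 B1 : Finset V} {s s1 : ℕ}
    (h : DenseR r A B s) (hA : A1 ⊆ A) (hB : B1 ⊆ B) (hs : s ≤ s1) : DenseR r A1 B1 s1 :=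
  fun A' hA' B' hB' h1 h2 => h A' (hA'.trans hA) B' (hB'.trans hB) (hs.trans h1) (hs.trans h2)

theorem dense_pairs {ι : Type} [DecidableEq ι] (R : ℕ) (hR : 1 ≤ R) (L : List (ι × ι))
    (hL : ∀ x ∈ L, x.1 ≠ x.2) :
    ∃ Γ : ℕ, 1 ≤ Γ ∧ ∀ (V : Type) (o : V → V → Prop) (s0 : ℕ), 1 ≤ s0 →
      (∀ A B : Finset V, Disjoint A B → s0 ≤ A.card → s0 ≤ B.card → ∃ u ∈ A, ∃ v ∈ B, o u v ∨ o v u) →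
      ∀ (W : ι → Finset V) (M : ℕ), (∀ i j, i ≠ j → Disjoint (W i) (W j)) → (∀ i, M ≤ (W i).card) →
      Γ * s0 ≤ M → ∃ (U : ι → Finset V) (s : ℕ), (∀ i, U i ⊆ W i) ∧ s0 ≤ s ∧ M ≤ Γ * s ∧
        (∀ i, R * s ≤ (U i).card) ∧
        ∀ x ∈ L, DenseR o (U x.1) (U x.2) s ∨ DenseR o (U x.2) (U x.1) s := by
  classical
  induction L with
  | nil =>
    refine ⟨2 * R, by omega, ?_⟩
    intro V o s0 hs0 _ W M _ hM hs
    refine ⟨W, M / R, fun _ => Finset.Subset.refl _, ?_, ?_, ?_, by simp⟩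
    · rw [Nat.le_div_iff_mul_le (by omega)]
      nlinarith
    · have h1 : s0 ≤ M / R := by
        rw [Nat.le_div_iff_mul_le (by omega)]
        nlinarith
      have h2 := Nat.lt_div_mul_add (a := M) (b := R) (by omega)
      nlinarith
    · intro i
      exact (Nat.mul_div_le M R).trans (hM i)
  | cons x L ih =>
    obtain ⟨Γ, hΓ, h⟩ := ih (fun y hy => hL y (List.mem_cons_of_mem _ hy))
    have hx := hL x List.mem_cons_self
    refine ⟨2 * Γ * Γ, by nlinarith, ?_⟩
    intro V o s0 hs0 hj W M hd hM hs
    have hs1 : 2 * Γ * s0 ≤ M / Γ := by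
      rw [Nat.le_div_iff_mul_le (by omega)]
      nlinarith
    have hs2 := Nat.lt_div_mul_add (a := M) (b := Γ) (by omega)
    have hs3 : M / Γ ≤ M := Nat.div_le_self _ _
    have hs4 : Γ * s0 ≤ 2 * Γ * s0 := by nlinarith
    have hs5 : 1 ≤ Γ * s0 := Nat.mul_pos hΓ hs0
    by_cases hD : DenseR o (W x.1) (W x.2) (M / Γ)
    · obtain ⟨U, s, hU, h1, h2, h3, h4⟩ := h V o s0 hs0 hj W M hd hM (by omega)
      refine ⟨U, s, hU, h1, by nlinarith, h3, ?_⟩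
      intro y hy
      rcases List.mem_cons.1 hy with rfl | hy
      · left
        refine hD.mono (hU _) (hU _) ?_
        exact Nat.div_le_of_le_mul h2
      · exact h4 y hy
    · unfold DenseR at hD
      push Not at hD
      obtain ⟨A, hA, B, hB, hAc, hBc, hAB⟩ := hD
      set W' : ι → Finset V := fun i => if i = x.1 then A else if i = x.2 then B else W i with hW'
      have hW1 : W' x.1 = A := by simp [hW']
      have hW2 : W' x.2 = B := by simp [hW', hx.symm]
      have hsub : ∀ i, W' i ⊆ W i := by
        intro i
        simp only [hW']
        split_ifs with h1 h2
        · rw [h1]; exact hA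
        · rw [h2]; exact hB
        · exact Finset.Subset.refl _
      obtain ⟨U, s, hU, h1, h2, h3, h4⟩ := h V o s0 hs0 hj W' (M / Γ)
        (fun i j hij => (hd i j hij).mono (hsub i) (hsub j)) (by
          intro i
          simp only [hW']
          split_ifs
          · exact hAc
          · exact hBc
          · exact hs3.trans (hM i)) (by omega)
      refine ⟨U, s, fun i => (hU i).trans (hsub i), h1, ?_, h3, ?_⟩
      · have : M ≤ 2 * Γ * (M / Γ) := by nlinarith
        nlinarith
      · intro y hy
        rcases List.mem_cons.1 hy with rfl | hy
        · right
          intro B' hB' A' hA' hb ha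
          have hB'' := hB'.trans ((hU _).trans hW2.le)
          have hA'' := hA'.trans ((hU _).trans hW1.le)
          obtain ⟨u, hu, v, hv, huv⟩ := hj A' B' ((hd _ _ hx).mono (hA''.trans hA) (hB''.trans hB))
            (by omega) (by omega)
          rcases huv with huv | huv
          · exact absurd huv (hAB u (hA'' hu) v (hB'' hv))
          · exact ⟨v, hv, u, hu, huv⟩
        · exact h4 y hy

theorem ramsey_chain {ι : Type*} [DecidableEq ι] (r : ι → ι → Prop) (k : ℕ) :
    ∀ S : Finset ι, 2 ^ k ≤ S.card → (∀ i ∈ S, ∀ j ∈ S, i ≠ j → r i j ∨ r j i) →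
      ∃ f : ℕ → ι, (∀ i ≤ k, f i ∈ S) ∧ ∀ i j, i < j → j ≤ k → r (f i) (f j) := by
  classical
  induction k with
  | zero =>
    intro S hS _
    obtain ⟨x, hx⟩ := Finset.card_pos.1 (by simpa using hS)
    refine ⟨fun _ => x, fun _ _ => hx, ?_⟩
    intro i j h1 h2
    omega
  | succ k ih =>
    intro S hS hr
    have hpos : 0 < 2 ^ k := by positivity
    rw [pow_succ] at hS
    obtain ⟨x, hx⟩ := Finset.card_pos.1 (show 0 < S.card by omega)
    have hc : (S.erase x).card + 1 = S.card := Finset.card_erase_add_one hx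
    have hsplit := Finset.card_filter_add_card_filter_not (s := S.erase x) (fun y => r x y)
    by_cases h : 2 ^ k ≤ ((S.erase x).filter (fun y => r x y)).card
    · obtain ⟨f, hf, hf2⟩ := ih _ h (by
        intro i hi j hj hij
        exact hr i (Finset.mem_of_mem_erase (Finset.mem_filter.1 hi).1) j (Finset.mem_of_mem_erase (Finset.mem_filter.1 hj).1) hij)
      refine ⟨fun i => if i = 0 then x else f (i - 1), ?_, ?_⟩
      · intro i hi
        dsimp only
        split_ifs
        · exact hx
        · exact Finset.mem_of_mem_erase (Finset.mem_filter.1 (hf (i - 1) (by omega))).1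
      · intro i j hij hj
        dsimp only
        rw [if_neg (by omega : ¬ j = 0)]
        split_ifs
        · exact (Finset.mem_filter.1 (hf (j - 1) (by omega))).2
        · exact hf2 _ _ (by omega) (by omega)
    · obtain ⟨f, hf, hf2⟩ := ih ((S.erase x).filter (fun y => ¬ r x y)) (by omega) (by
        intro i hi j hj hij
        exact hr i (Finset.mem_of_mem_erase (Finset.mem_filter.1 hi).1) j (Finset.mem_of_mem_erase (Finset.mem_filter.1 hj).1) hij)
      refine ⟨fun i => if i ≤ k then f i else x, ?_, ?_⟩
      · intro i hi
        dsimp only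
        split_ifs with h1
        · exact Finset.mem_of_mem_erase (Finset.mem_filter.1 (hf i h1)).1
        · exact hx
      · intro i j hij hj
        dsimp only
        rw [if_pos (by omega : i ≤ k)]
        split_ifs
        · exact hf2 _ _ (by omega) (by omega)
        · have h1 := Finset.mem_filter.1 (hf i (by omega))
          have h2 := Finset.mem_erase.1 h1.1
          rcases hr x hx _ h2.2 h2.1.symm with h3 | h3
          · exact absurd h3 h1.2
          · exact h3

open Classical in
theorem few_bad {V : Type*} (r : V → V → Prop) (A B : Finset V) (s a : ℕ) (ha : 1 ≤ a) (hs : 1 ≤ s)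
    (h : DenseR r A B s) (hB : a * s ≤ B.card) :
    (A.filter (fun v => (B.filter (r v)).card < a)).card < s := by
  by_contra hc
  push Not at hc
  obtain ⟨X, hX, hXc⟩ := Finset.exists_subset_card_eq hc
  have h1 : (X.biUnion (fun v => B.filter (r v))).card ≤ s * (a - 1) := by
    rw [← hXc]
    apply Finset.card_biUnion_le_card_mul
    intro v hv
    have := (Finset.mem_filter.1 (hX hv)).2
    omega
  have h2 := Finset.le_card_sdiff (X.biUnion (fun v => B.filter (r v))) B
  have h3 : s * (a - 1) + s = a * s := by
    obtain ⟨c, rfl⟩ := Nat.exists_eq_add_of_le ha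
    simp
    ring
  obtain ⟨u, hu, v, hv, huv⟩ := h X (hX.trans (Finset.filter_subset _ _)) (B \ X.biUnion (fun v => B.filter (r v)))
    Finset.sdiff_subset (by omega) (by omega)
  rw [Finset.mem_sdiff] at hv
  exact hv.2 (Finset.mem_biUnion.2 ⟨u, hu, Finset.mem_filter.2 ⟨hv.1, huv⟩⟩)

open Classical in
theorem clean {V : Type*} (a s : ℕ) (ha : 1 ≤ a) (hs : 1 ≤ s) (N : ℕ → ℕ → V → V → Prop)
    (U : ℕ → Finset V) (hU : ∀ i ≤ a, (2 * a + 2) * s ≤ (U i).card)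
    (hD : ∀ i ≤ a, ∀ j ≤ a, i ≠ j → DenseR (N i j) (U i) (U j) s) :
    ∃ X : ℕ → Finset V, (∀ i ≤ a, X i ⊆ U i) ∧ (∀ i ≤ a, (X i).Nonempty) ∧
      ∀ i ≤ a, ∀ j ≤ a, i ≠ j → ∀ v ∈ X i, a ≤ ((X j).filter (N i j v)).card := by
  let P : (ℕ → Finset V) → Prop := fun X => (∀ i ≤ a, X i ⊆ U i) ∧
    (∀ i ≤ a, ∀ v ∈ U i, v ∉ X i → ∃ j ≤ a, j ≠ i ∧ ((X j).filter (N i j v)).card < a) ∧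
    ∀ i ≤ a, (a + 1) * s ≤ (X i).card
  have hex : ∃ k, ∃ X, P X ∧ ∑ i ∈ Finset.range (a + 1), (X i).card = k := by
    refine ⟨_, U, ⟨fun _ _ => Finset.Subset.refl _, fun i _ v hv hv' => absurd hv hv', ?_⟩, rfl⟩
    intro i hi
    have := hU i hi
    nlinarith
  obtain ⟨X, ⟨hXU, hX2, hX3⟩, hXk⟩ := Nat.find_spec hex
  refine ⟨X, hXU, ?_, ?_⟩
  · intro i hi
    apply Finset.card_pos.1
    have := hX3 i hi
    nlinarith
  · by_contra hcon
    push Not at hcon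
    obtain ⟨i, hi, j, hj, hij, v, hv, hlt⟩ := hcon
    set Y : ℕ → Finset V := fun t => if t = i then (X i).erase v else X t with hY
    have hYi : Y i = (X i).erase v := by simp [hY]
    have hYt : ∀ t, t ≠ i → Y t = X t := by
      intro t ht
      simp [hY, ht]
    have hYX : ∀ t, Y t ⊆ X t := by
      intro t
      by_cases ht : t = i
      · subst ht
        rw [hYi]
        exact Finset.erase_subset _ _
      · rw [hYt t ht]
    have hlow : ∀ t ≤ a, a * s ≤ (Y t).card := by
      intro t ht
      have h3 := hX3 t ht
      rw [Nat.succ_mul] at h3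
      by_cases hti : t = i
      · subst hti
        rw [hYi, Finset.card_erase_of_mem hv]
        omega
      · rw [hYt t hti]
        omega
    have hY2 : ∀ t ≤ a, ∀ w ∈ U t, w ∉ Y t → ∃ j ≤ a, j ≠ t ∧ ((Y j).filter (N t j w)).card < a := by
      intro t ht w hw hwY
      by_cases hwX : w ∈ X t
      · have hti : t = i := by
          by_contra hti
          rw [hYt t hti] at hwY
          exact hwY hwX
        subst hti
        have : w = v := by
          by_contra hwv
          rw [hYi] at hwY
          exact hwY (Finset.mem_erase.2 ⟨hwv, hwX⟩)
        subst this
        refine ⟨j, hj, hij.symm, ?_⟩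
        rw [hYt j hij.symm]
        exact hlt
      · obtain ⟨j', hj', hjt, hlt'⟩ := hX2 t ht w hw hwX
        exact ⟨j', hj', hjt, (Finset.card_le_card (Finset.filter_subset_filter _ (hYX j'))).trans_lt hlt'⟩
    have hPY : P Y := by
      refine ⟨fun t ht => (hYX t).trans (hXU t ht), hY2, ?_⟩
      intro t ht
      have h1 : U t \ Y t ⊆ ((Finset.range (a + 1)).filter (fun j => j ≠ t)).biUnion
          (fun j => (U t).filter (fun w => ((Y j).filter (N t j w)).card < a)) := by
        intro w hw
        rw [Finset.mem_sdiff] at hw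
        obtain ⟨j', h1, h2, h3⟩ := hY2 t ht w hw.1 hw.2
        refine Finset.mem_biUnion.2 ⟨j', ?_, Finset.mem_filter.2 ⟨hw.1, h3⟩⟩
        simp only [Finset.mem_filter, Finset.mem_range]
        exact ⟨by omega, h2⟩
      have h2 : (U t \ Y t).card ≤ (a + 1) * s := by
        refine (Finset.card_le_card h1).trans ?_
        refine (Finset.card_biUnion_le_card_mul _ _ s ?_).trans ?_
        · intro j' hj'
          simp only [Finset.mem_filter, Finset.mem_range] at hj'
          apply le_of_lt
          apply few_bad _ _ _ _ _ ha hs _ (hlow j' (by omega))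
          exact (hD t ht j' (by omega) hj'.2.symm).mono (Finset.Subset.refl _)
            ((hYX j').trans (hXU j' (by omega))) le_rfl
        · apply Nat.mul_le_mul_right
          refine (Finset.card_filter_le _ _).trans ?_
          simp
      have h3 := Finset.le_card_sdiff (Y t) (U t)
      have h4 := hU t ht
      have h5 : (2 * a + 2) * s = (a + 1) * s + (a + 1) * s := by ring
      omega
    have hlt2 : ∑ t ∈ Finset.range (a + 1), (Y t).card < ∑ t ∈ Finset.range (a + 1), (X t).card := by
      apply Finset.sum_lt_sum
      · intro t _
        exact Finset.card_le_card (hYX t)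
      · refine ⟨i, Finset.mem_range.2 (by omega), ?_⟩
        rw [hYi]
        exact Finset.card_erase_lt_of_mem hv
    rw [hXk] at hlt2
    exact Nat.find_min hex hlt2 ⟨Y, hPY, rfl⟩

/-- The deterministic embedding statement. -/
theorem arrows_of_joint (a : ℕ) (ha : 1 ≤ a) : ∃ Γ : ℕ, 1 ≤ Γ ∧
    ∀ (m : ℕ) (T : Fin m → Fin m → Prop), (∀ x y, T x y → ¬ T y x) → (SimpleGraph.fromRel T).IsTree →
      (∀ v, ((SimpleGraph.fromRel T).neighborSet v).ncard ≤ a) → dirHeight T ≤ a →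
    ∀ (V : Type) (G : SimpleGraph V) (s0 : ℕ), 1 ≤ s0 →
      (∀ A B : Finset V, Disjoint A B → s0 ≤ A.card → s0 ≤ B.card → ∃ u ∈ A, ∃ v ∈ B, G.Adj u v) →
      ∀ Z : Finset V, (∀ S ⊆ Z, S.Nonempty → S.card ≤ m → eIn G S < S.card) →
      2 ^ a * (Γ * s0) ≤ Z.card → Arrows G T := by
  classical
  obtain ⟨Γ, hΓ, h⟩ := dense_pairs (ι := Fin (2 ^ a)) (2 * a + 2) (by omega)
    ((Finset.univ : Finset (Fin (2 ^ a))).offDiag.toList) (by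
      intro x hx
      rw [Finset.mem_toList, Finset.mem_offDiag] at hx
      exact hx.2.2)
  refine ⟨Γ, hΓ, ?_⟩
  intro m T hT htree hdeg hht V G s0 hs0 hj Z hZ hZc o ho
  -- partition Z
  obtain ⟨Z', hZ', hZ'c⟩ := Finset.exists_subset_card_eq hZc
  have e : Fin (2 ^ a) × Fin (Γ * s0) ≃ Z' := by
    apply Fintype.equivOfCardEq
    simp [hZ'c]
  let W : Fin (2 ^ a) → Finset V := fun i => Finset.univ.image (fun t => (e (i, t) : V))
  have hW : ∀ i j, i ≠ j → Disjoint (W i) (W j) := by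
    intro i j hij
    rw [Finset.disjoint_left]
    intro x hx hy
    simp only [W, Finset.mem_image, Finset.mem_univ, true_and] at hx hy
    obtain ⟨t, rfl⟩ := hx
    obtain ⟨t', ht'⟩ := hy
    have := e.injective (Subtype.ext ht')
    exact hij (Prod.mk.inj this).1.symm
  have hWc : ∀ i, Γ * s0 ≤ (W i).card := by
    intro i
    rw [Finset.card_image_of_injective]
    · simp
    · intro t t' htt
      have := e.injective (Subtype.ext htt)
      exact (Prod.mk.inj this).2
  have hWZ : ∀ i, W i ⊆ Z := by
    intro i x hx
    simp only [W, Finset.mem_image, Finset.mem_univ, true_and] at hx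
    obtain ⟨t, rfl⟩ := hx
    exact hZ' (e (i, t)).2
  obtain ⟨U, s, hU, hs, -, hUc, hUD⟩ := h V o s0 hs0 (by
    intro A B hAB h1 h2
    obtain ⟨u, hu, v, hv, huv⟩ := hj A B hAB h1 h2
    refine ⟨u, hu, v, hv, ?_⟩
    have := ho.2 u v huv
    tauto) W (Γ * s0) hW hWc le_rfl
  obtain ⟨f, -, hf⟩ := ramsey_chain (fun i j => DenseR o (U i) (U j) s) a (Finset.univ : Finset (Fin (2 ^ a)))
    (by simp) (by
      intro i _ j _ hij
      exact hUD (i, j) (by simp [hij]))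
  obtain ⟨X, hXU, hXne, hXd⟩ := clean a s ha (by omega) (fun i j v w => if i < j then o v w else o w v)
    (fun i => U (f i)) (fun i _ => hUc _) (by
      intro i hi j hj hij
      rcases lt_or_gt_of_ne hij with hlt | hlt
      · simp only [hlt, if_true]
        exact hf i j hlt hj
      · simp only [not_lt.2 hlt.le, if_false]
        intro A hA B hB h1 h2
        obtain ⟨u, hu, v, hv, huv⟩ := hf j i hlt hi B hB A hA h2 h1
        exact ⟨v, hv, u, hu, huv⟩)
  obtain ⟨l, hla, hl⟩ := exists_levels T hT htree a hht
  refine embed_tree a T hT htree hdeg l hla hl G o ho X hXne ?_ ?_ ?_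
  · intro i j hij hj v hv
    have := hXd i (by omega) j hj (by omega) v hv
    simpa only [hij, if_true] using this
  · intro i j hij hj v hv
    have := hXd j (by omega) i (by omega) (by omega) v hv
    simpa only [not_lt.2 hij.le, if_false] using this
  · intro S hS hne hSm
    refine hZ S ?_ hne hSm
    intro v hv
    obtain ⟨i, hi, hvi⟩ := hS v hv
    exact hWZ _ (hU _ (hXU i hi hvi))


open Classical in
/-- weighted count of the small dense sets -/
noncomputable def badY {n : ℕ} (m : ℕ) (G : SimpleGraph (Fin n)) : ℝ :=
  ∑ S ∈ (Finset.univ : Finset (Fin n)).powerset.filter (fun S => 1 ≤ S.card ∧ S.card ≤ m),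
      ∑ F ∈ (ES S).powersetCard S.card, if (F : Set (Sym2 (Fin n))) ⊆ G.edgeSet then (1:ℝ) else 0

theorem Ex_badY (n m : ℕ) (p : ℝ) : Ex n p (badY m) =
    ∑ s ∈ Finset.range (n + 1), if 1 ≤ s ∧ s ≤ m then (n.choose s : ℝ) * ((s.choose 2).choose s * p ^ s) else 0 := by
  classical
  unfold badY
  rw [Ex_sum]
  rw [Finset.sum_congr rfl (g := fun S => (((S.card).choose 2).choose (S.card) : ℝ) * p ^ (S.card))]
  · rw [Finset.sum_filter]
    rw [Finset.sum_powerset_apply_card (fun s => if 1 ≤ s ∧ s ≤ m then ((s.choose 2).choose s : ℝ) * p ^ s else 0)]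
    rw [Finset.card_univ, Fintype.card_fin]
    refine Finset.sum_congr rfl fun s _ => ?_
    split_ifs <;> simp
  · intro S _
    rw [Ex_sum]
    rw [Finset.sum_congr rfl (g := fun _ => p ^ S.card)]
    · rw [Finset.sum_const, Finset.card_powersetCard, ES_card, nsmul_eq_mul]
    · intro F hF
      rw [Finset.mem_powersetCard] at hF
      rw [Ex_subset n p F (hF.1.trans (ES_mono (Finset.subset_univ _))), hF.2]

theorem Ex_badY_le (n m : ℕ) (b : ℝ) (hb : 0 < b) (hn : 1 ≤ n) : Ex n (b / n) (badY m) ≤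
    ∑ s ∈ Finset.range (m + 1), ((s.choose 2).choose s : ℝ) * b ^ s := by
  rw [Ex_badY, ← Finset.sum_filter]
  have hn0 : (0:ℝ) < n := by exact_mod_cast hn
  refine (Finset.sum_le_sum (g := fun s => ((s.choose 2).choose s : ℝ) * b ^ s) ?_).trans ?_
  · intro s _
    have h1 : (n.choose s : ℝ) ≤ n ^ s := by exact_mod_cast Nat.choose_le_pow n s
    calc (n.choose s : ℝ) * ((s.choose 2).choose s * (b / n) ^ s)
        ≤ n ^ s * ((s.choose 2).choose s * (b / n) ^ s) := by gcongr
      _ = ((s.choose 2).choose s : ℝ) * b ^ s := by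
        rw [div_pow]
        field_simp
  · apply Finset.sum_le_sum_of_subset_of_nonneg
    · intro s hs
      simp only [Finset.mem_filter, Finset.mem_range] at hs ⊢
      omega
    · intro s _ _
      positivity

theorem badY_nonneg {n : ℕ} (m : ℕ) (G : SimpleGraph (Fin n)) : 0 ≤ badY m G := by
  unfold badY
  exact Finset.sum_nonneg fun S _ => Finset.sum_nonneg fun F _ => by split_ifs <;> norm_num

open Classical in
theorem card_bad_le {n : ℕ} (m : ℕ) (G : SimpleGraph (Fin n)) :
    (((Finset.univ : Finset (Fin n)).powerset.filter
      (fun S => (1 ≤ S.card ∧ S.card ≤ m) ∧ S.card ≤ eIn G S)).card : ℝ) ≤ badY m G := by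
  unfold badY
  rw [← Finset.filter_filter, Finset.card_filter, Nat.cast_sum]
  apply Finset.sum_le_sum
  intro S _
  have nn : 0 ≤ ∑ F ∈ (ES S).powersetCard (S.card), if (F : Set (Sym2 (Fin n))) ⊆ G.edgeSet then (1:ℝ) else 0 :=
    Finset.sum_nonneg fun F _ => by split_ifs <;> norm_num
  split_ifs with hk
  · obtain ⟨F, hF, hFc⟩ := Finset.exists_subset_card_eq hk
    have hFm : F ∈ (ES S).powersetCard (S.card) :=
      Finset.mem_powersetCard.2 ⟨hF.trans (Finset.filter_subset _ _), hFc⟩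
    refine le_trans ?_ (Finset.single_le_sum (fun F _ => by split_ifs <;> norm_num) hFm)
    rw [if_pos]
    · simp
    intro e he
    exact (Finset.mem_filter.1 (hF he)).2
  · simpa using nn

/-- clean vertex set -/
theorem exists_clean {n : ℕ} (m : ℕ) (G : SimpleGraph (Fin n)) (h : ¬ ((n : ℝ) < 2 * m * badY m G)) :
    ∃ Z : Finset (Fin n), (∀ S ⊆ Z, S.Nonempty → S.card ≤ m → eIn G S < S.card) ∧ n ≤ 2 * Z.card := by
  classical
  set B := (Finset.univ : Finset (Fin n)).powerset.filter
      (fun S => (1 ≤ S.card ∧ S.card ≤ m) ∧ S.card ≤ eIn G S) with hB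
  refine ⟨Finset.univ \ B.biUnion id, ?_, ?_⟩
  · intro S hS hne hSm
    by_contra hcon
    push Not at hcon
    have hSB : S ∈ B := by
      rw [hB, Finset.mem_filter]
      exact ⟨by simp, ⟨Finset.card_pos.2 hne, hSm⟩, hcon⟩
    obtain ⟨v, hv⟩ := hne
    have := (Finset.mem_sdiff.1 (hS hv)).2
    exact this (Finset.mem_biUnion.2 ⟨S, hSB, hv⟩)
  · have h1 : (B.biUnion id).card ≤ B.card * m := by
      apply Finset.card_biUnion_le_card_mul
      intro S hS
      exact (Finset.mem_filter.1 hS).2.1.2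
    have h2 : (B.card : ℝ) ≤ badY m G := card_bad_le m G
    have h3 : 2 * (B.card * m) ≤ n := by
      have : (2 * (B.card * m) : ℝ) ≤ n := by
        push Not at h
        have hm : (0:ℝ) ≤ m := by positivity
        nlinarith
      exact_mod_cast this
    have h4 := Finset.le_card_sdiff (B.biUnion id) (Finset.univ : Finset (Fin n))
    rw [Finset.card_univ, Fintype.card_fin] at h4
    omega

theorem prob_bad_le (n m : ℕ) (b : ℝ) (hb : 0 < b) (hn : 1 ≤ n) (hbn : b ≤ n) :
    probGnp n (b / n) (fun G => (n : ℝ) < 2 * m * badY m G) ≤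
      2 * m * (∑ s ∈ Finset.range (m + 1), ((s.choose 2).choose s : ℝ) * b ^ s) / n := by
  have hn0 : (0:ℝ) < n := by exact_mod_cast hn
  have h0 : 0 ≤ b / n := by positivity
  have h1 : b / n ≤ 1 := by rw [div_le_one hn0]; exact hbn
  refine (prob_le_Ex h0 h1 _ (fun G => (2 * m / n : ℝ) * badY m G) ?_ ?_).trans ?_
  · intro G
    have := badY_nonneg m G
    positivity
  · intro G hG
    rw [div_mul_eq_mul_div, le_div_iff₀ hn0]
    linarith
  · rw [Ex_mul]
    have := Ex_badY_le n m b hb hn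
    refine (mul_le_mul_of_nonneg_left this (by positivity)).trans (le_of_eq ?_)
    ring

/-- edges between A and B -/
theorem prob_joint_le (n s0 : ℕ) (p : ℝ) (h0 : 0 ≤ p) (h1 : p ≤ 1) :
    probGnp n p (fun G => ¬ ∀ A B : Finset (Fin n), Disjoint A B → s0 ≤ A.card → s0 ≤ B.card →
      ∃ u ∈ A, ∃ v ∈ B, G.Adj u v) ≤ 4 ^ n * (1 - p) ^ (s0 * s0) := by
  classical
  let EB : Finset (Fin n) → Finset (Fin n) → Finset (Sym2 (Fin n)) := fun A B =>
    (A ×ˢ B).image (fun x => s(x.1, x.2))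
  let I : Finset (Finset (Fin n) × Finset (Fin n)) :=
    Finset.univ.filter (fun x => Disjoint x.1 x.2 ∧ s0 ≤ x.1.card ∧ s0 ≤ x.2.card)
  refine (prob_le_Ex h0 h1 _ (fun G => ∑ x ∈ I, if (∀ e ∈ EB x.1 x.2, e ∉ G.edgeSet) then (1:ℝ) else 0) ?_ ?_).trans ?_
  · intro G
    exact Finset.sum_nonneg fun F _ => by split_ifs <;> norm_num
  · intro G hG
    push Not at hG
    obtain ⟨A, B, hd, hA, hB, hAB⟩ := hG
    have hm : (A, B) ∈ I := by simp [I, hd, hA, hB]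
    refine le_trans ?_ (Finset.single_le_sum (fun F _ => by split_ifs <;> norm_num) hm)
    rw [if_pos]
    intro e he
    simp only [EB, Finset.mem_image, Finset.mem_product] at he
    obtain ⟨⟨u, v⟩, ⟨hu, hv⟩, rfl⟩ := he
    exact hAB u hu v hv
  · rw [Ex_sum]
    have hq0 : 0 ≤ 1 - p := by linarith
    have hq1 : 1 - p ≤ 1 := by linarith
    have hterm : ∀ x ∈ I, Ex n p (fun G => if (∀ e ∈ EB x.1 x.2, e ∉ G.edgeSet) then (1:ℝ) else 0) ≤
        (1 - p) ^ (s0 * s0) := by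
      rintro ⟨A, B⟩ hx
      simp only [I, Finset.mem_filter, Finset.mem_univ, true_and] at hx
      obtain ⟨hd, hA, hB⟩ := hx
      have hne : ∀ u ∈ A, ∀ v ∈ B, u ≠ v := by
        rintro u hu v hv rfl
        exact Finset.disjoint_left.1 hd hu hv
      rw [Ex_disjoint]
      · apply pow_le_pow_of_le_one hq0 hq1
        simp only [EB]
        rw [Finset.card_image_of_injOn]
        · rw [Finset.card_product]
          exact Nat.mul_le_mul hA hB
        · rintro ⟨u, v⟩ hx ⟨u', v'⟩ hy h
          simp only [Finset.mem_coe, Finset.mem_product] at hx hy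
          simp only [Sym2.eq_iff] at h
          rcases h with ⟨rfl, rfl⟩ | ⟨h1, h2⟩
          · rfl
          · exact absurd h1 (hne u hx.1 v' hy.2)
      · intro e he
        simp only [EB, Finset.mem_image, Finset.mem_product] at he
        obtain ⟨⟨u, v⟩, ⟨hu, hv⟩, rfl⟩ := he
        rw [mem_ES]
        exact ⟨Finset.mem_univ _, Finset.mem_univ _, hne u hu v hv⟩
    refine (Finset.sum_le_card_nsmul _ _ _ hterm).trans ?_
    rw [nsmul_eq_mul]
    have hI : I.card ≤ 4 ^ n := by
      refine (Finset.card_le_univ _).trans ?_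
      simp only [Fintype.card_prod, Fintype.card_finset, Fintype.card_fin]
      rw [← mul_pow]
      norm_num
    have hI' : (I.card : ℝ) ≤ 4 ^ n := by exact_mod_cast hI
    gcongr

theorem joint_bound (n Q : ℕ) (b : ℝ) (hb : 2 * (Q : ℝ) ^ 2 < b) (hQ : 1 ≤ Q) (hn : 1 ≤ n) (hbn : b ≤ n) :
    (4:ℝ) ^ n * (1 - b / n) ^ ((n / Q + 1) * (n / Q + 1)) ≤ (4 * Real.exp (-2)) ^ n := by
  have hn0 : (0:ℝ) < n := by exact_mod_cast hn
  have hQ0 : (0:ℝ) < Q := by exact_mod_cast hQ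
  have hb0 : 0 < b := lt_of_le_of_lt (by positivity) hb
  have h1 : b / n ≤ 1 := by rw [div_le_one hn0]; exact hbn
  rw [mul_pow]
  apply mul_le_mul_of_nonneg_left _ (by positivity)
  have h2 : 1 - b / n ≤ Real.exp (-(b / n)) := by
    have := Real.add_one_le_exp (-(b / n))
    linarith
  refine (pow_le_pow_left₀ (by linarith) h2 _).trans ?_
  rw [← Real.exp_nat_mul, ← Real.exp_nat_mul]
  apply Real.exp_le_exp.2
  have h3 : (n : ℝ) / Q ≤ ((n / Q + 1 : ℕ) : ℝ) := by
    rw [div_le_iff₀ hQ0]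
    have := Nat.lt_div_mul_add (a := n) (b := Q) (by omega)
    have h4 : n ≤ (n / Q + 1) * Q := by rw [Nat.add_mul]; omega
    exact_mod_cast h4
  set t : ℝ := ((n / Q + 1 : ℕ) : ℝ) with ht
  have h5 : ((((n / Q + 1) * (n / Q + 1) : ℕ)) : ℝ) = t * t := by rw [ht]; push_cast; ring
  rw [h5]
  have h6 : (n : ℝ) / Q * (n / Q) ≤ t * t := by gcongr
  have h7 : 2 * (n:ℝ) ≤ n / Q * (n / Q) * (b / n) := by
    have : (n : ℝ) / Q * (n / Q) * (b / n) = n * (b / Q ^ 2) := by field_simp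
    rw [this]
    have : 2 ≤ b / (Q : ℝ) ^ 2 := by
      rw [le_div_iff₀ (by positivity)]
      exact hb.le
    nlinarith
  have h8 : (n : ℝ) / Q * (n / Q) * (b / n) ≤ t * t * (b / n) := by gcongr
  linarith

theorem hdeg_of {m : ℕ} (T : Fin m → Fin m → Prop) (v : Fin m) :
    ((SimpleGraph.fromRel T).neighborSet v).ncard ≤ maxDeg (SimpleGraph.fromRel T) := by
  unfold maxDeg
  apply le_csSup
  · refine ⟨m, ?_⟩
    rintro d ⟨w, rfl⟩
    refine (Set.ncard_le_card _).trans ?_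
    simp
  · exact ⟨v, rfl⟩

open Filter in
theorem upper_part (a : ℕ) (ha : 3 ≤ a) : ∃ C : ℝ, 2 ≤ C ∧ ∀ b : ℝ, C < b → ∀ (m : ℕ) (T : Fin m → Fin m → Prop),
    (∀ x y, T x y → ¬ T y x) → (SimpleGraph.fromRel T).IsTree → treeParam T = a →
      Tendsto (fun n : ℕ => probGnp n (b / n) (fun G => Arrows G T)) atTop (nhds 1) := by
  obtain ⟨Γ, hΓ, h⟩ := arrows_of_joint a (by omega)
  set D := 2 ^ a * Γ with hD
  have hD1 : 1 ≤ D := Nat.mul_pos (by positivity) hΓ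
  set Q := 4 * D with hQ
  have hQ1 : 1 ≤ Q := by omega
  have hQr : (1:ℝ) ≤ Q := by exact_mod_cast hQ1
  refine ⟨2 * (Q : ℝ) ^ 2, by nlinarith, ?_⟩
  intro b hb m T hT htree hpar
  have hb0 : 0 < b := lt_of_le_of_lt (by positivity) hb
  set Kc : ℝ := ∑ s ∈ Finset.range (m + 1), ((s.choose 2).choose s : ℝ) * b ^ s with hKc
  have hlim : Tendsto (fun n : ℕ => 1 - (2 * m * Kc / n + (4 * Real.exp (-2)) ^ n)) atTop (nhds 1) := by
    have h1 : Tendsto (fun n : ℕ => 2 * m * Kc / (n : ℝ)) atTop (nhds 0) := tendsto_const_div_atTop_nhds_zero_nat _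
    have h2 : Tendsto (fun n : ℕ => (4 * Real.exp (-2)) ^ n) atTop (nhds 0) := by
      apply tendsto_pow_atTop_nhds_zero_of_lt_one (by positivity)
      rw [Real.exp_neg]
      have he := Real.exp_one_gt_d9
      have : Real.exp 2 = Real.exp 1 * Real.exp 1 := by rw [← Real.exp_add]; norm_num
      rw [← div_eq_mul_inv, div_lt_one (Real.exp_pos _), this]
      nlinarith
    have := (h1.add h2).const_sub 1
    simpa using this
  have hev : ∀ᶠ n : ℕ in atTop, 1 ≤ n ∧ b ≤ (n : ℝ) ∧ 4 * D ≤ n :=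
    (eventually_ge_atTop 1).and ((tendsto_natCast_atTop_atTop.eventually_ge_atTop b).and (eventually_ge_atTop _))
  refine tendsto_of_tendsto_of_tendsto_of_le_of_le' hlim tendsto_const_nhds ?_ ?_
  · filter_upwards [hev] with n hn
    obtain ⟨hn1, hbn, hDn⟩ := hn
    have hn0 : (0:ℝ) < n := by exact_mod_cast hn1
    have h0 : 0 ≤ b / n := by positivity
    have h1 : b / n ≤ 1 := by rw [div_le_one hn0]; exact hbn
    rw [prob_not]
    apply sub_le_sub_left
    refine (prob_mono h0 h1 (R := fun G => (n : ℝ) < 2 * m * badY m G ∨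
      ¬ ∀ A B : Finset (Fin n), Disjoint A B → n / Q + 1 ≤ A.card → n / Q + 1 ≤ B.card →
      ∃ u ∈ A, ∃ v ∈ B, G.Adj u v) ?_).trans ((prob_or_le h0 h1).trans (add_le_add ?_ ?_))
    · intro G hG
      by_contra hcon
      rw [not_or, not_not] at hcon
      apply hG
      obtain ⟨Z, hZ, hZc⟩ := exists_clean m G hcon.1
      refine h m T hT htree (fun v => (hdeg_of T v).trans ?_) ?_ (Fin n) G (n / Q + 1) (Nat.le_add_left 1 _) hcon.2 Z hZ ?_
      · rw [← hpar]; exact le_max_right _ _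
      · rw [← hpar]; exact le_max_left _ _
      · rw [← mul_assoc, ← hD]
        have h2 := Nat.mul_div_le n Q
        have h3 : 4 * (D * (n / Q)) = Q * (n / Q) := by rw [hQ]; ring
        have h4 : D * (n / Q + 1) = D * (n / Q) + D := by ring
        omega
    · exact prob_bad_le n m b hb0 hn1 hbn
    · exact (prob_joint_le n _ _ h0 h1).trans (joint_bound n Q b hb hQ1 hn1 hbn)
  · filter_upwards [hev] with n hn
    obtain ⟨hn1, hbn, hDn⟩ := hn
    have hn0 : (0:ℝ) < n := by exact_mod_cast hn1
    have h0 : 0 ≤ b / n := by positivity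
    have h1 : b / n ≤ 1 := by rw [div_le_one hn0]; exact hbn
    rw [prob_not]
    have := prob_nonneg h0 h1 (fun G : SimpleGraph (Fin n) => ¬ Arrows G T)
    linarith

open Filter in
/-- For every `a ≥ 3` there are constants `1 < c_a ≤ C_a` such that, with `p = b/n`:
for every oriented tree `T⃗` with `a(T⃗) = a`, if `b < c_a` then a.a.s.
`G(n,p) ↛ T⃗`, and if `b > C_a` then a.a.s. `G(n,p) → T⃗`. -/
theorem stmt4 (a : ℕ) (ha : 3 ≤ a) :
    ∃ c C : ℝ, 1 < c ∧ c ≤ C ∧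
      ∀ b : ℝ, 0 < b → ∀ (m : ℕ) (T : Fin m → Fin m → Prop),
        (∀ x y, T x y → ¬ T y x) → (SimpleGraph.fromRel T).IsTree →
        treeParam T = a →
        (b < c →
          Tendsto (fun n : ℕ => probGnp n (b / n) (fun G => Arrows G T)) atTop (nhds 0)) ∧
        (C < b →
          Tendsto (fun n : ℕ => probGnp n (b / n) (fun G => Arrows G T)) atTop (nhds 1)) := by
  obtain ⟨C, hC, hup⟩ := upper_part a ha
  refine ⟨1.005, C, by norm_num, by linarith, ?_⟩
  intro b hb m T hT htree hpar
  refine ⟨?_, fun hCb => hup b hCb m T hT htree hpar⟩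
  intro hbc
  have hev : ∀ᶠ n : ℕ in atTop, 1 ≤ n ∧ b ≤ (n : ℝ) :=
    (eventually_ge_atTop 1).and (tendsto_natCast_atTop_atTop.eventually_ge_atTop b)
  refine tendsto_of_tendsto_of_tendsto_of_le_of_le' tendsto_const_nhds (noCore_tendsto hb hbc.le) ?_ ?_
  · filter_upwards [hev] with n hn
    have hn0 : (0:ℝ) < n := by exact_mod_cast hn.1
    exact prob_nonneg (by positivity) (by rw [div_le_one hn0]; exact hn.2) _
  · filter_upwards [hev] with n hn
    have hn0 : (0:ℝ) < n := by exact_mod_cast hn.1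
    refine prob_mono (by positivity) (by rw [div_le_one hn0]; exact hn.2) ?_
    intro G hG hno
    exact hno.not_arrows T hT (by omega) hG
end

section
/- Let H⃗ be an oriented graph with h vertices, l arcs, and at least one arc. Let D ≥ 1 be a constant and set τ = D·n^{-1/m₂(H⃗)}. Then the co-degree function of the l-uniform hypergraph 𝒟(n,H⃗) satisfies δ(𝒟(n,H⃗), τ) ≤ 2^{C(l,2)}·h^{h−2}·D^{-1}. -/
/-- The 2-density associated to a (sub)graph with `v` vertices and `e` edges:
`(e-1)/(v-2)` if `v ≥ 3`, `1/2` for a single edge, and `0` otherwise. -/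
noncomputable def d2 (v e : ℕ) : ℝ :=
  if 3 ≤ v then (e - 1 : ℝ) / (v - 2 : ℝ) else if e = 1 then 1 / 2 else 0

/-- The maximum 2-density `m₂(H)` of a finite simple graph `H`. -/
noncomputable def m2 {α : Type*} [Fintype α] (H : SimpleGraph α) : ℝ :=
  sSup {x : ℝ | ∃ J : H.Subgraph, x = d2 J.verts.ncard J.edgeSet.ncard}

/-- The maximum 2-density of an oriented graph: that of its underlying graph. -/
noncomputable def m2Rel {β : Type*} [Fintype β] (H : β → β → Prop) : ℝ :=
  m2 (SimpleGraph.fromRel H)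

/-- The vertex set of the hypergraph `𝒟(n,H⃗)`: the arcs of the complete digraph `D⃗_n`. -/
abbrev ArcDn (n : ℕ) := {p : Fin n × Fin n // p.1 ≠ p.2}

/-- The hyperedges of `𝒟(n,H⃗)`: sets of arcs of `D⃗_n` forming a digraph isomorphic
to `H⃗`. -/
def hyperedgesD (n : ℕ) {β : Type*} (H : β → β → Prop) : Set (Finset (ArcDn n)) :=
  {B | ∃ f : β → Fin n, Function.Injective f ∧
    ∀ p : ArcDn n, p ∈ B ↔ ∃ a b, H a b ∧ p.val = (f a, f b)}

/-- The degree `d(J)` of a set `J` of vertices of `𝒟(n,H⃗)`: the number of hyperedges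
containing `J`. -/
noncomputable def degD (n : ℕ) {β : Type*} (H : β → β → Prop) (J : Finset (ArcDn n)) : ℕ :=
  {B ∈ hyperedgesD n H | J ⊆ B}.ncard

/-- The maximum `j`-degree `d^{(j)}(v)` of a vertex `v` of `𝒟(n,H⃗)`. -/
noncomputable def maxDegD (n : ℕ) {β : Type*} (H : β → β → Prop) (j : ℕ) (v : ArcDn n) : ℕ :=
  sSup {d : ℕ | ∃ J : Finset (ArcDn n), v ∈ J ∧ J.card = j ∧ d = degD n H J}

/-- The average `d_j` of the maximum `j`-degrees over all vertices of `𝒟(n,H⃗)`. -/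
noncomputable def avgDegD (n : ℕ) {β : Type*} (H : β → β → Prop) (j : ℕ) : ℝ :=
  (∑ v : ArcDn n, (maxDegD n H j v : ℝ)) / (Fintype.card (ArcDn n) : ℝ)

/-- The quantity `δ_j = d_j/(d₁·τ^{j-1})` for `𝒟(n,H⃗)`. -/
noncomputable def deltaJD (n : ℕ) {β : Type*} (H : β → β → Prop) (j : ℕ) (τ : ℝ) : ℝ :=
  avgDegD n H j / (avgDegD n H 1 * τ ^ (j - 1))

/-- The co-degree function `δ(𝒟(n,H⃗),τ) = 2^{C(l,2)-1}·Σ_{j=2}^{l} 2^{-C(j-1,2)}·δ_j`. -/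
noncomputable def codegD (n : ℕ) {β : Type*} (H : β → β → Prop) (l : ℕ) (τ : ℝ) : ℝ :=
  (2 : ℝ) ^ ((l.choose 2 : ℤ) - 1) *
    ∑ j ∈ Finset.Icc 2 l, (2 : ℝ) ^ (-((j - 1).choose 2 : ℤ)) * deltaJD n H j τ

open Finset in
theorem perm_fiber {V α : Type*} [Fintype V] [Fintype α] [DecidableEq α]
    (ι g : V ↪ α) :
    #{σ : Equiv.Perm α | ∀ x, σ (ι x) = g x} =
      (Fintype.card α - Fintype.card V).factorial := by
  classical
  have key : ∀ g : V ↪ α, #{σ : Equiv.Perm α | ∀ x, σ (ι x) = g x} =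
      #{σ : Equiv.Perm α | ∀ x, σ (ι x) = ι x} := by
    intro g
    obtain ⟨τ, hτ⟩ := Equiv.Perm.exists_extending_pair ι g ι.injective g.injective
    refine Finset.card_bij' (fun σ _ => τ⁻¹ * σ) (fun σ _ => τ * σ) ?_ ?_ ?_ ?_
    · intro σ hσ
      simp only [mem_filter, mem_univ, true_and] at hσ ⊢
      intro x
      simp [hσ, ← hτ]
    · intro σ hσ
      simp only [mem_filter, mem_univ, true_and] at hσ ⊢
      intro x
      simp [hσ, ← hτ]
    · intro σ _; simp
    · intro σ _; simp
  have hle : Fintype.card V ≤ Fintype.card α := Fintype.card_le_of_embedding ι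
  have h1 : Fintype.card (Equiv.Perm α) =
      ∑ g : V ↪ α, #{σ : Equiv.Perm α | ∀ x, σ (ι x) = g x} := by
    rw [← Finset.card_univ, Finset.card_eq_sum_card_fiberwise
      (f := fun σ : Equiv.Perm α => ι.trans σ.toEmbedding) (t := univ) (by simp)]
    refine Finset.sum_congr rfl fun g _ => ?_
    congr 1
    ext σ
    simp [DFunLike.ext_iff]
  simp_rw [key] at h1
  rw [Finset.sum_const, Finset.card_univ, Fintype.card_embedding_eq, Fintype.card_perm,
    ← Nat.factorial_mul_descFactorial hle, smul_eq_mul, mul_comm] at h1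
  rw [key g]
  exact (Nat.eq_of_mul_eq_mul_left (Nat.descFactorial_pos.2 hle) h1).symm

open Finset in
/-- counting permutations sending `(x0,x1)` into `B` and `V` into `W`. -/
theorem perm_count {α : Type*} [Fintype α] [DecidableEq α]
    (V W : Finset α) (B : Finset (α × α)) (hB : ∀ p ∈ B, p.1 ≠ p.2 ∧ p.1 ∈ W ∧ p.2 ∈ W)
    (x0 x1 : α) (h01 : x0 ≠ x1) (h0 : x0 ∈ V) (h1 : x1 ∈ V) :
    #{σ : Equiv.Perm α | (σ x0, σ x1) ∈ B ∧ ∀ x ∈ V, σ x ∈ W} ≤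
      #B * (#W - 2).descFactorial (#V - 2) * (Fintype.card α - #V).factorial := by
  classical
  have hS : ∀ p ∈ B, #{g : V ↪ α | (g ⟨x0, h0⟩ = p.1 ∧ g ⟨x1, h1⟩ = p.2) ∧ ∀ x, g x ∈ W} ≤
      (#W - 2).descFactorial (#V - 2) := by
    intro p hp
    obtain ⟨hp1, hp2, hp3⟩ := hB p hp
    have hV : #(V \ {x0, x1}) = #V - 2 := by
      rw [card_sdiff_of_subset (by grind), card_pair h01]
    have hW : #(W \ {p.1, p.2}) = #W - 2 := by
      rw [card_sdiff_of_subset (by grind), card_pair hp1]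
    rw [← hV, ← hW, ← Fintype.card_coe (W \ {p.1, p.2}),
      ← Fintype.card_coe (V \ {x0, x1}),
      ← Fintype.card_embedding_eq, ← Fintype.card_subtype]
    refine Fintype.card_le_of_injective
      (fun g => ⟨fun x => ⟨g.1 ⟨x.1, by grind⟩, ?_⟩, ?_⟩) ?_
    · have h2 := g.2.2 ⟨x.1, by grind⟩
      have hx := x.2
      simp only [mem_sdiff, mem_insert, mem_singleton] at hx ⊢
      refine ⟨h2, ?_⟩
      rintro (h | h)
      · have := g.1.injective (h.trans g.2.1.1.symm)
        exact hx.2 (Or.inl (congrArg Subtype.val this))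
      · have := g.1.injective (h.trans g.2.1.2.symm)
        exact hx.2 (Or.inr (congrArg Subtype.val this))
    · intro x y hxy
      have := g.1.injective (congrArg Subtype.val hxy)
      exact Subtype.ext (Subtype.mk.inj this)
    · intro g g' hgg
      ext x
      by_cases hx0 : x.1 = x0
      · have : x = ⟨x0, h0⟩ := Subtype.ext hx0
        rw [this, g.2.1.1, g'.2.1.1]
      by_cases hx1 : x.1 = x1
      · have : x = ⟨x1, h1⟩ := Subtype.ext hx1
        rw [this, g.2.1.2, g'.2.1.2]
      have := congrArg (fun e => (e ⟨x.1, by simp [hx0, hx1]⟩).1) hgg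
      exact this
  have hT : #{g : V ↪ α | (g ⟨x0, h0⟩, g ⟨x1, h1⟩) ∈ B ∧ ∀ x, g x ∈ W} ≤
      #B * (#W - 2).descFactorial (#V - 2) := by
    refine le_trans (card_le_card ?_) (card_biUnion_le_card_mul B _ _ hS)
    intro g hg
    simp only [mem_filter, mem_univ, true_and, mem_biUnion] at hg ⊢
    exact ⟨_, hg.1, ⟨rfl, rfl⟩, hg.2⟩
  refine le_trans ?_ (Nat.mul_le_mul_right _ hT)
  let ι : V ↪ α := Function.Embedding.subtype _
  rw [mul_comm]
  refine Finset.card_le_mul_card_image_of_maps_to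
    (f := fun σ : Equiv.Perm α => ι.trans σ.toEmbedding) ?_ _ ?_
  · intro σ hσ
    simp only [mem_filter, mem_univ, true_and] at hσ ⊢
    exact ⟨hσ.1, fun x => hσ.2 x x.2⟩
  · intro g _
    rw [← Fintype.card_coe V, ← perm_fiber ι g]
    refine card_le_card ?_
    intro σ hσ
    simp only [mem_filter, mem_univ, true_and] at hσ ⊢
    intro x
    rw [← hσ.2]; rfl

theorem desc_ineq (h n k : ℕ) (hn : h ≤ n) :
    (h - 2).descFactorial k * n ^ k ≤ h ^ k * (n - 2).descFactorial k := by
  induction k with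
  | zero => simp
  | succ k ih =>
    rw [Nat.descFactorial_succ, Nat.descFactorial_succ, pow_succ, pow_succ]
    have h1 : (h - 2 - k) * n ≤ h * (n - 2 - k) := by
      obtain hc | hc := le_total h (2 + k)
      · have : h - 2 - k = 0 := by omega
        simp [this]
      · obtain ⟨a, rfl⟩ := Nat.exists_eq_add_of_le hc
        obtain ⟨b, rfl⟩ := Nat.exists_eq_add_of_le hn
        have e1 : 2 + k + a - 2 - k = a := by omega
        have e2 : 2 + k + a + b - 2 - k = a + b := by omega
        rw [e1, e2]; nlinarith
    calc _ = ((h - 2 - k) * n) * ((h - 2).descFactorial k * n ^ k) := by ring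
      _ ≤ (h * (n - 2 - k)) * (h ^ k * (n - 2).descFactorial k) := Nat.mul_le_mul h1 ih
      _ = _ := by ring

open Classical in
/-- The copy of `H` given by `f`. -/
noncomputable def copyD (n : ℕ) {β : Type*} (H : β → β → Prop) (f : β → Fin n) :
    Finset (ArcDn n) :=
  Finset.univ.filter (fun p => ∃ a b, H a b ∧ p.val = (f a, f b))

theorem mem_copyD {n : ℕ} {β : Type*} {H : β → β → Prop} {f : β → Fin n} {p : ArcDn n} :
    p ∈ copyD n H f ↔ ∃ a b, H a b ∧ p.val = (f a, f b) := by
  simp [copyD]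

theorem mem_hyper {n : ℕ} {β : Type*} {H : β → β → Prop} {B : Finset (ArcDn n)} :
    B ∈ hyperedgesD n H ↔ ∃ f : β → Fin n, Function.Injective f ∧ B = copyD n H f := by
  simp only [hyperedgesD, Set.mem_ofPred_eq, Finset.ext_iff, mem_copyD]

theorem copyD_comp {n : ℕ} {β : Type*} {H : β → β → Prop} (τ : Equiv.Perm (Fin n))
    {f g : β → Fin n} (hfg : copyD n H f = copyD n H g) :
    copyD n H (τ ∘ f) = copyD n H (τ ∘ g) := by
  have key : ∀ (f : β → Fin n) (p : ArcDn n), p ∈ copyD n H (τ ∘ f) ↔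
      (⟨(τ⁻¹ p.1.1, τ⁻¹ p.1.2), fun h => p.2 (τ⁻¹.injective h)⟩ : ArcDn n) ∈ copyD n H f := by
    intro f p
    simp only [mem_copyD, Prod.ext_iff, Function.comp, Equiv.Perm.inv_eq_iff_eq]
  ext p
  rw [key, key, hfg]

open Finset in
open Classical in
theorem degD_mul {n : ℕ} {β : Type*} [Fintype β] {H : β → β → Prop} {f0 : β → Fin n}
    (hf0 : Function.Injective f0) (J : Finset (ArcDn n)) :
    degD n H J * #{σ : Equiv.Perm (Fin n) | copyD n H (σ ∘ f0) = copyD n H f0} =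
      #{σ : Equiv.Perm (Fin n) | J ⊆ copyD n H (σ ∘ f0)} := by
  have e1 : degD n H J = #{B | B ∈ hyperedgesD n H ∧ J ⊆ B} := by
    rw [degD, ← Set.ncard_coe_finset]
    congr 1
    ext B; simp
  rw [e1, Finset.card_eq_sum_card_fiberwise (s := {σ : Equiv.Perm (Fin n) | J ⊆ copyD n H (σ ∘ f0)})
      (f := fun σ : Equiv.Perm (Fin n) => copyD n H (σ ∘ f0))
      (t := {B | B ∈ hyperedgesD n H ∧ J ⊆ B}), Finset.sum_const_nat]
  · intro B hB
    simp only [mem_filter, mem_univ, true_and] at hB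
    obtain ⟨hB, hJ⟩ := hB
    obtain ⟨g, hg, rfl⟩ := mem_hyper.1 hB
    obtain ⟨τ, hτ⟩ := Equiv.Perm.exists_extending_pair f0 g hf0 hg
    have hg' : g = τ ∘ f0 := by ext x; simp [hτ]
    subst hg'
    refine Finset.card_bij' (fun σ _ => τ⁻¹ * σ) (fun σ _ => τ * σ) ?_ ?_ ?_ ?_
    · intro σ hσ
      simp only [mem_filter, mem_univ, true_and] at hσ ⊢
      have := copyD_comp τ⁻¹ hσ.2
      rw [← Function.comp_assoc, ← Function.comp_assoc, ← Equiv.Perm.coe_mul,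
        ← Equiv.Perm.coe_mul, inv_mul_cancel] at this
      exact this
    · intro σ hσ
      simp only [mem_filter, mem_univ, true_and] at hσ ⊢
      have := copyD_comp τ hσ
      rw [← Function.comp_assoc, ← Equiv.Perm.coe_mul] at this
      rw [this]
      exact ⟨hJ, rfl⟩
    · intro σ _; simp
    · intro σ _; simp
  · intro σ hσ
    simp only [coe_filter, mem_univ, true_and, Set.mem_ofPred_eq] at hσ ⊢
    exact ⟨mem_hyper.2 ⟨_, σ.injective.comp hf0, rfl⟩, hσ⟩

theorem card_copyD {n : ℕ} {β : Type*} [Fintype β] {H : β → β → Prop}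
    (hor : ∀ a b, H a b → ¬ H b a) {f : β → Fin n}
    (hf : Function.Injective f) : (copyD n H f).card = {p : β × β | H p.1 p.2}.ncard := by
  rw [← Set.ncard_coe_finset]
  symm
  refine Set.ncard_congr (fun p hp => ⟨(f p.1, f p.2), fun h => ?_⟩) ?_ ?_ ?_
  · have := hf h
    have hp' : H p.1 p.2 := hp
    rw [this] at hp'
    exact hor _ _ hp' hp'
  · intro p hp
    exact mem_copyD.2 ⟨_, _, hp, rfl⟩
  · intro p q hp hq h
    simp only [Subtype.mk.injEq, Prod.mk.injEq] at h
    exact Prod.ext (hf h.1) (hf h.2)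
  · intro p hp
    obtain ⟨a, b, hab, e⟩ := mem_copyD.1 hp
    exact ⟨(a, b), hab, Subtype.ext e.symm⟩

/-- vertices spanned by a set of arcs -/
def vertsD {n : ℕ} (J : Finset (ArcDn n)) : Finset (Fin n) :=
  J.image (fun p => p.1.1) ∪ J.image (fun p => p.1.2)

theorem mem_vertsD {n : ℕ} {J : Finset (ArcDn n)} {x : Fin n} :
    x ∈ vertsD J ↔ ∃ p ∈ J, p.1.1 = x ∨ p.1.2 = x := by
  simp only [vertsD, Finset.mem_union, Finset.mem_image]
  grind

theorem density {n : ℕ} {β : Type*} [Fintype β] {H : β → β → Prop}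
    (hor : ∀ a b, H a b → ¬ H b a) {f : β → Fin n}
    (hf : Function.Injective f) (J : Finset (ArcDn n)) (hJ : J ⊆ copyD n H f)
    (h2 : 2 ≤ J.card) :
    3 ≤ (vertsD J).card ∧
      ((J.card : ℝ) - 1) / (((vertsD J).card : ℝ) - 2) ≤ m2Rel H := by
  classical
  have h3 : 3 ≤ (vertsD J).card := by
    obtain ⟨p, hp, q, hq, hpq⟩ := Finset.one_lt_card.1 (show 1 < J.card by omega)
    obtain ⟨a, b, hab, e⟩ := mem_copyD.1 (hJ hp)
    obtain ⟨a', b', hab', e'⟩ := mem_copyD.1 (hJ hq)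
    have hp1 : p.1.1 ∈ vertsD J := mem_vertsD.2 ⟨p, hp, Or.inl rfl⟩
    have hp2 : p.1.2 ∈ vertsD J := mem_vertsD.2 ⟨p, hp, Or.inr rfl⟩
    have hq1 : q.1.1 ∈ vertsD J := mem_vertsD.2 ⟨q, hq, Or.inl rfl⟩
    have hq2 : q.1.2 ∈ vertsD J := mem_vertsD.2 ⟨q, hq, Or.inr rfl⟩
    have hne : ¬ (q.1.1 = p.1.1 ∧ q.1.2 = p.1.2) := fun h =>
      hpq (Subtype.ext (Prod.ext h.1.symm h.2.symm))
    have hne' : ¬ (q.1.1 = p.1.2 ∧ q.1.2 = p.1.1) := by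
      rw [e, e']
      rintro ⟨h, h'⟩
      have k := hf h
      have k' := hf h'
      rw [k, k'] at hab'
      exact hor _ _ hab hab'
    have hp3 := p.2
    have hq3 := q.2
    have : ∃ z ∈ vertsD J, z ≠ p.1.1 ∧ z ≠ p.1.2 := by
      by_contra! hcon
      have := hcon _ hq1
      have := hcon _ hq2
      grind
    obtain ⟨z, hz, hz1, hz2⟩ := this
    rw [← Finset.card_eq_three.2 ⟨z, p.1.1, p.1.2, hz1, hz2, hp3, rfl⟩]
    refine Finset.card_le_card ?_
    intro w hw
    simp only [Finset.mem_insert, Finset.mem_singleton] at hw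
    rcases hw with rfl | rfl | rfl <;> assumption
  refine ⟨h3, ?_⟩
  let K : (SimpleGraph.fromRel H).Subgraph :=
    { verts := {a | f a ∈ vertsD J}
      Adj := fun a b => ∃ p ∈ J, p.1 = (f a, f b) ∨ p.1 = (f b, f a)
      adj_sub := by
        rintro a b ⟨p, hp, h⟩
        obtain ⟨c, d, hcd, e⟩ := mem_copyD.1 (hJ hp)
        have hne : c ≠ d := by
          rintro rfl
          exact hor _ _ hcd hcd
        rw [e] at h
        rw [SimpleGraph.fromRel_adj]
        simp only [Prod.mk.injEq, hf.eq_iff] at h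
        rcases h with ⟨rfl, rfl⟩ | ⟨rfl, rfl⟩
        · exact ⟨hne, Or.inl hcd⟩
        · exact ⟨hne.symm, Or.inr hcd⟩
      edge_vert := by
        rintro a b ⟨p, hp, h⟩
        refine mem_vertsD.2 ⟨p, hp, ?_⟩
        rcases h with h | h
        · left; rw [h]
        · right; rw [h]
      symm := ⟨by
        rintro a b ⟨p, hp, h⟩
        exact ⟨p, hp, h.symm⟩⟩ }
  have hv : K.verts.ncard = (vertsD J).card := by
    rw [← Set.ncard_coe_finset]
    refine Set.ncard_congr (fun a _ => f a) (fun a ha => ha) (fun a b _ _ h => hf h) ?_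
    intro x hx
    obtain ⟨p, hp, h⟩ := mem_vertsD.1 hx
    obtain ⟨c, d, hcd, e⟩ := mem_copyD.1 (hJ hp)
    rw [e] at h
    rcases h with h | h
    · exact ⟨c, by rw [← h] at hx; exact hx, h⟩
    · exact ⟨d, by rw [← h] at hx; exact hx, h⟩
  have he : K.edgeSet.ncard = J.card := by
    rw [← Set.ncard_coe_finset]
    symm
    have hex : ∀ p ∈ J, ∃ q : β × β, H q.1 q.2 ∧ p.1 = (f q.1, f q.2) := by
      intro p hp
      obtain ⟨c, d, hcd, e⟩ := mem_copyD.1 (hJ hp)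
      exact ⟨(c, d), hcd, e⟩
    choose φ hφ1 hφ2 using hex
    refine Set.ncard_congr (fun p hp => s((φ p hp).1, (φ p hp).2)) ?_ ?_ ?_
    · intro p hp
      exact ⟨p, hp, Or.inl (hφ2 p hp)⟩
    · intro p q hp hq h
      have a1 := hφ1 p hp
      have a2 := hφ1 q hq
      have b1 := hφ2 p hp
      have b2 := hφ2 q hq
      rw [Sym2.eq_iff] at h
      rcases h with ⟨h, h'⟩ | ⟨h, h'⟩
      · apply Subtype.ext
        rw [b1, b2, h, h']
      · rw [h, h'] at a1
        exact absurd a2 (hor _ _ a1)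
    · intro s
      induction s with
      | h a b =>
        rintro ⟨p, hp, h⟩
        refine ⟨p, hp, ?_⟩
        rw [hφ2 p hp] at h
        simp only [Prod.mk.injEq, hf.eq_iff] at h
        rw [Sym2.eq_iff]
        exact h
  rw [m2Rel, m2]
  refine le_csSup ?_ ⟨K, ?_⟩
  · refine Set.Finite.bddAbove ?_
    refine (Set.finite_range
      (fun J : (SimpleGraph.fromRel H).Subgraph => d2 J.verts.ncard J.edgeSet.ncard)).subset ?_
    rintro x ⟨J, rfl⟩
    exact ⟨J, rfl⟩
  · rw [hv, he, d2, if_pos h3]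

open Finset in
theorem degD_upper {n : ℕ} {β : Type*} [Fintype β] {H : β → β → Prop}
    (hor : ∀ a b, H a b → ¬ H b a) {f0 : β → Fin n}
    (hf0 : Function.Injective f0) (J : Finset (ArcDn n)) (p0 : ArcDn n) (hp0 : p0 ∈ J)
    [DecidablePred fun σ : Equiv.Perm (Fin n) => J ⊆ copyD n H (σ ∘ f0)] :
    #{σ : Equiv.Perm (Fin n) | J ⊆ copyD n H (σ ∘ f0)} ≤
      {p : β × β | H p.1 p.2}.ncard * (Fintype.card β - 2).descFactorial (#(vertsD J) - 2) *
        (n - #(vertsD J)).factorial := by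
  classical
  have := perm_count (vertsD J) (univ.image f0)
    ((copyD n H f0).map (Function.Embedding.subtype _)) ?_ p0.1.1 p0.1.2 p0.2
    (mem_vertsD.2 ⟨p0, hp0, Or.inl rfl⟩) (mem_vertsD.2 ⟨p0, hp0, Or.inr rfl⟩)
  · rw [card_map, card_copyD hor hf0, card_image_of_injective _ hf0, card_univ,
      Fintype.card_fin] at this
    refine le_trans ?_ this
    refine card_le_card_of_injOn (fun σ => σ⁻¹) ?_ (fun a _ b _ h => inv_injective h)
    intro σ hσ
    simp only [coe_filter, mem_univ, true_and, Set.mem_ofPred_eq] at hσ ⊢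
    constructor
    · obtain ⟨a, b, hab, e⟩ := mem_copyD.1 (hσ hp0)
      have e1 : σ⁻¹ p0.1.1 = f0 a := by rw [e]; simp
      have e2 : σ⁻¹ p0.1.2 = f0 b := by rw [e]; simp
      rw [e1, e2]
      have hne : f0 a ≠ f0 b := by
        intro h
        have h := hf0 h
        subst h
        exact hor _ _ hab hab
      exact mem_map.2 ⟨⟨(f0 a, f0 b), hne⟩, mem_copyD.2 ⟨a, b, hab, rfl⟩, rfl⟩
    · intro x hx
      obtain ⟨p, hp, h⟩ := mem_vertsD.1 hx
      obtain ⟨a, b, hab, e⟩ := mem_copyD.1 (hσ hp)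
      rw [e] at h
      rcases h with h | h
      · rw [← h]; simp
      · rw [← h]; simp
  · intro p hp
    obtain ⟨q, hq, rfl⟩ := mem_map.1 hp
    obtain ⟨a, b, hab, e⟩ := mem_copyD.1 hq
    refine ⟨q.2, ?_, ?_⟩
    · change q.1.1 ∈ _
      rw [e]; simp
    · change q.1.2 ∈ _
      rw [e]; simp

theorem maxDegD_one {n : ℕ} {β : Type*} (H : β → β → Prop) (v : ArcDn n) :
    maxDegD n H 1 v = degD n H {v} := by
  have : {d : ℕ | ∃ J : Finset (ArcDn n), v ∈ J ∧ J.card = 1 ∧ d = degD n H J} =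
      {degD n H {v}} := by
    ext d
    constructor
    · rintro ⟨J, hv, hJ, rfl⟩
      obtain ⟨w, rfl⟩ := Finset.card_eq_one.1 hJ
      rw [Finset.mem_singleton] at hv
      rw [hv]; rfl
    · rintro rfl
      exact ⟨{v}, by simp, by simp, rfl⟩
  rw [maxDegD, this, csSup_singleton]

theorem card_ArcDn (n : ℕ) : Fintype.card (ArcDn n) = n * (n - 1) := by
  rw [Fintype.card_subtype]
  have := Finset.offDiag_card (Finset.univ : Finset (Fin n))
  rw [Finset.card_univ, Fintype.card_fin] at this
  rw [Nat.mul_sub, mul_one, ← this]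
  congr 1
  ext p; simp

open Finset in
open Classical in
theorem avgDegD_one {n : ℕ} {β : Type*} [Fintype β] {H : β → β → Prop}
    (hor : ∀ a b, H a b → ¬ H b a) {f0 : β → Fin n}
    (hf0 : Function.Injective f0) (hn : 2 ≤ n) :
    avgDegD n H 1 * #{σ : Equiv.Perm (Fin n) | copyD n H (σ ∘ f0) = copyD n H f0} =
      {p : β × β | H p.1 p.2}.ncard * (n - 2).factorial := by
  have h1 : (∑ v : ArcDn n, maxDegD n H 1 v) *
      #{σ : Equiv.Perm (Fin n) | copyD n H (σ ∘ f0) = copyD n H f0} =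
      {p : β × β | H p.1 p.2}.ncard * n.factorial := by
    rw [Finset.sum_mul]
    simp_rw [maxDegD_one, degD_mul hf0, singleton_subset_iff]
    have := sum_card_bipartiteAbove_eq_sum_card_bipartiteBelow
      (s := (univ : Finset (ArcDn n))) (t := (univ : Finset (Equiv.Perm (Fin n))))
      (fun (v : ArcDn n) (σ : Equiv.Perm (Fin n)) => v ∈ copyD n H (σ ∘ f0))
    simp only [bipartiteAbove, bipartiteBelow] at this
    rw [this, Finset.sum_const_nat (m := {p : β × β | H p.1 p.2}.ncard), card_univ,
      Fintype.card_perm, Fintype.card_fin, mul_comm]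
    intro σ _
    rw [← card_copyD hor (σ.injective.comp hf0)]
    congr 1
    ext p; simp
  obtain ⟨m, rfl⟩ := Nat.exists_eq_add_of_le' hn
  rw [avgDegD, card_ArcDn, div_mul_eq_mul_div, div_eq_iff (by push_cast; positivity)]
  have h2 : (m + 2).factorial = (m + 2 - 2).factorial * ((m + 2) * (m + 2 - 1)) := by
    simp [Nat.factorial_succ]; ring
  rw [h2] at h1
  rw [mul_assoc]
  exact_mod_cast h1

theorem key_bound {n : ℕ} {β : Type*} [Fintype β] {H : β → β → Prop}
    (hor : ∀ a b, H a b → ¬ H b a) (J : Finset (ArcDn n)) (p0 : ArcDn n) (hp0 : p0 ∈ J)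
    (h2 : 2 ≤ J.card) (D : ℝ) (hD : 1 ≤ D) :
    (degD n H J : ℝ) ≤ (Fintype.card β : ℝ) ^ (Fintype.card β - 2) * D⁻¹ *
      (avgDegD n H 1 * (D * (n : ℝ) ^ (-(1 / m2Rel H))) ^ (J.card - 1)) := by
  classical
  have hA : 0 ≤ avgDegD n H 1 := by unfold avgDegD; positivity
  by_cases hdeg : degD n H J = 0
  · rw [hdeg, Nat.cast_zero]
    positivity
  obtain ⟨B, hB, hJB⟩ := Set.nonempty_of_ncard_ne_zero hdeg
  obtain ⟨f, hf, rfl⟩ := mem_hyper.1 hB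
  obtain ⟨h3, hm⟩ := density hor hf J hJB h2
  have hhn : Fintype.card β ≤ n := by
    simpa using Fintype.card_le_of_injective f hf
  have hvn : (vertsD J).card ≤ n := by simpa using Finset.card_le_univ (vertsD J)
  have hvh : (vertsD J).card ≤ Fintype.card β := by
    rw [← Finset.card_univ, ← Finset.card_image_of_injective _ hf]
    refine Finset.card_le_card ?_
    intro x hx
    obtain ⟨p, hp, h⟩ := mem_vertsD.1 hx
    obtain ⟨a, b, hab, e⟩ := mem_copyD.1 (hJB hp)
    rw [e] at h
    rcases h with h | h
    · rw [← h]; simp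
    · rw [← h]; simp
  have e1 := degD_mul (H := H) hf J
  have e2 := degD_upper hor hf J p0 hp0
  have e3 := avgDegD_one hor hf (by omega)
  have hc : 0 < (Finset.univ.filter
      (fun σ : Equiv.Perm (Fin n) => copyD n H (σ ∘ f) = copyD n H f)).card := by
    refine Finset.card_pos.2 ⟨1, ?_⟩
    simp
  set c := (Finset.univ.filter
      (fun σ : Equiv.Perm (Fin n) => copyD n H (σ ∘ f) = copyD n H f)).card
  set l := {p : β × β | H p.1 p.2}.ncard
  set h := Fintype.card β
  set j := J.card
  rw [← e1] at e2
  obtain ⟨k, hk⟩ := Nat.exists_eq_add_of_le' (show 2 ≤ (vertsD J).card by omega)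
  rw [hk] at e2 h3 hvn hvh hm
  -- the combinatorial inequality
  have e4 : degD n H J * c * n ^ k ≤ l * (n - 2).factorial * h ^ (h - 2) := by
    have a1 := desc_ineq h n k hhn
    have a2 : (n - 2).factorial = (n - (k + 2)).factorial * (n - 2).descFactorial k := by
      rw [← Nat.factorial_mul_descFactorial (show k ≤ n - 2 by omega)]
      congr 2; omega
    have a3 : h ^ k ≤ h ^ (h - 2) := Nat.pow_le_pow_right (by omega) (by omega)
    calc degD n H J * c * n ^ k
        ≤ l * (h - 2).descFactorial (k + 2 - 2) * (n - (k + 2)).factorial * n ^ k :=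
          Nat.mul_le_mul_right _ e2
      _ = l * (n - (k + 2)).factorial * ((h - 2).descFactorial k * n ^ k) := by
          rw [Nat.add_sub_cancel]; ring
      _ ≤ l * (n - (k + 2)).factorial * (h ^ k * (n - 2).descFactorial k) :=
          Nat.mul_le_mul_left _ a1
      _ = l * (n - 2).factorial * h ^ k := by rw [a2]; ring
      _ ≤ _ := Nat.mul_le_mul_left _ a3
  have hn0 : (1 : ℝ) ≤ n := by exact_mod_cast (show 1 ≤ n by omega)
  have hnpos : (0 : ℝ) < n := by linarith
  have hcR : (0 : ℝ) < c := by exact_mod_cast hc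
  have e5 : (degD n H J : ℝ) * (n : ℝ) ^ k ≤ avgDegD n H 1 * (h : ℝ) ^ (h - 2) := by
    have : (degD n H J : ℝ) * c * (n : ℝ) ^ k ≤ l * (n - 2).factorial * (h : ℝ) ^ (h - 2) := by
      exact_mod_cast e4
    rw [← e3] at this
    refine le_of_mul_le_mul_right ?_ hcR
    linarith
  -- tau
  have hkpos : (0 : ℝ) < k := by exact_mod_cast (show 0 < k by omega)
  have hjpos : (0 : ℝ) < (j : ℝ) - 1 := by
    have : (2 : ℝ) ≤ j := by exact_mod_cast h2
    linarith
  have hm' : ((j : ℝ) - 1) / k ≤ m2Rel H := by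
    refine le_trans (le_of_eq ?_) hm
    push_cast; ring
  have hmpos : 0 < m2Rel H := lt_of_lt_of_le (by positivity) hm'
  have e6 : D * ((n : ℝ) ^ k)⁻¹ ≤ (D * (n : ℝ) ^ (-(1 / m2Rel H))) ^ (j - 1) := by
    rw [mul_pow]
    refine mul_le_mul (le_self_pow₀ hD (by omega)) ?_ (by positivity) (by positivity)
    rw [← Real.rpow_natCast, ← Real.rpow_natCast, ← Real.rpow_mul hnpos.le,
      ← Real.rpow_neg hnpos.le]
    refine Real.rpow_le_rpow_of_exponent_le hn0 ?_
    rw [Nat.cast_sub (by omega), Nat.cast_one]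
    rw [div_le_iff₀ hkpos] at hm'
    rw [neg_mul, neg_le_neg_iff, one_div, inv_mul_le_iff₀ hmpos]
    exact hm'
  have hDpos : 0 < D := by linarith
  calc (degD n H J : ℝ) ≤ avgDegD n H 1 * (h : ℝ) ^ (h - 2) * ((n : ℝ) ^ k)⁻¹ := by
        rw [← div_eq_mul_inv, le_div_iff₀ (by positivity)]; exact e5
    _ = (h : ℝ) ^ (h - 2) * D⁻¹ * (avgDegD n H 1 * (D * ((n : ℝ) ^ k)⁻¹)) := by
        field_simp
    _ ≤ _ := by gcongr

theorem choose_sum (l : ℕ) :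
    ∑ j ∈ Finset.Icc 2 l, (2 : ℝ) ^ (-((j - 1).choose 2 : ℤ)) ≤ 2 := by
  have h1 : ∀ l : ℕ, ∑ j ∈ Finset.Icc 2 (l + 1), (2 : ℝ) ^ (-((j - 1).choose 2 : ℤ)) ≤
      2 - (2 : ℝ) ^ (-((l : ℤ) - 1)) := by
    intro l
    induction l with
    | zero => norm_num
    | succ l ih =>
      rw [Finset.sum_Icc_succ_top (by omega)]
      have h2 : (2 : ℝ) ^ (-((l + 1 + 1 - 1).choose 2 : ℤ)) ≤ (2 : ℝ) ^ (-(l : ℤ)) := by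
        refine zpow_le_zpow_right₀ (by norm_num) ?_
        have : l ≤ (l + 1).choose 2 := by
          rw [Nat.choose_succ_succ' l 1]; simp
        simp only [Nat.add_sub_cancel]
        omega
      have h3 : (2 : ℝ) ^ (-((l : ℤ) - 1)) = 2 * (2 : ℝ) ^ (-(l : ℤ)) := by
        rw [show -((l : ℤ) - 1) = -(l : ℤ) + 1 by ring, zpow_add₀ (by norm_num)]; simp [mul_comm]
      have h4 : -(((l + 1 : ℕ) : ℤ) - 1) = -(l : ℤ) := by push_cast; ring
      rw [h4]
      linarith
  obtain _ | l := l
  · simp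
  · refine (h1 l).trans ?_
    have : (0 : ℝ) < (2 : ℝ) ^ (-((l : ℤ) - 1)) := by positivity
    linarith

/-- For an oriented graph `H⃗` with `h` vertices and `l ≥ 1` arcs, `D ≥ 1` and
`τ = D·n^{-1/m₂(H⃗)}`, the co-degree function satisfies
`δ(𝒟(n,H⃗),τ) ≤ 2^{C(l,2)}·h^{h-2}·D⁻¹`. -/
theorem stmt6 {β : Type*} [Fintype β] (H : β → β → Prop)
    (hor : ∀ a b, H a b → ¬ H b a)
    (h l : ℕ) (hh : h = Fintype.card β)
    (hl : l = {p : β × β | H p.1 p.2}.ncard) (hl1 : 1 ≤ l)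
    (D : ℝ) (hD : 1 ≤ D) (n : ℕ) :
    codegD n H l (D * (n : ℝ) ^ (-(1 / m2Rel H))) ≤
      (2 : ℝ) ^ (l.choose 2) * (h : ℝ) ^ (h - 2) * D⁻¹ := by
  subst hh
  set τ := D * (n : ℝ) ^ (-(1 / m2Rel H)) with hτ
  have hτ0 : 0 ≤ τ := by positivity
  set M := (Fintype.card β : ℝ) ^ (Fintype.card β - 2) * D⁻¹ with hM
  have hM0 : 0 ≤ M := by positivity
  have hA : 0 ≤ avgDegD n H 1 := by unfold avgDegD; positivity
  have hδ : ∀ j ∈ Finset.Icc 2 l, deltaJD n H j τ ≤ M := by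
    intro j hj
    have hj2 : 2 ≤ j := (Finset.mem_Icc.1 hj).1
    have hX : 0 ≤ avgDegD n H 1 * τ ^ (j - 1) := by positivity
    have hmax : ∀ v : ArcDn n, (maxDegD n H j v : ℝ) ≤ M * (avgDegD n H 1 * τ ^ (j - 1)) := by
      intro v
      rcases Set.eq_empty_or_nonempty
        {d : ℕ | ∃ J : Finset (ArcDn n), v ∈ J ∧ J.card = j ∧ d = degD n H J} with h0 | h0
      · rw [maxDegD, h0]
        simp only [csSup_empty, bot_eq_zero', Nat.cast_zero]
        positivity
      · have hb : BddAbove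
            {d : ℕ | ∃ J : Finset (ArcDn n), v ∈ J ∧ J.card = j ∧ d = degD n H J} := by
          refine Set.Finite.bddAbove
            ((Set.finite_range (fun J : Finset (ArcDn n) => degD n H J)).subset ?_)
          rintro d ⟨J, _, _, rfl⟩
          exact ⟨J, rfl⟩
        obtain ⟨J, hv, hJ, e⟩ := Nat.sSup_mem h0 hb
        rw [maxDegD, e]
        have := key_bound hor J v hv (by omega) D hD
        rw [hJ] at this
        exact this
    have havg : avgDegD n H j ≤ M * (avgDegD n H 1 * τ ^ (j - 1)) := by
      unfold avgDegD at hX ⊢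
      refine div_le_of_le_mul₀ (by positivity) (by positivity) ?_
      refine (Finset.sum_le_card_nsmul _ _ _ (fun v _ => hmax v)).trans (le_of_eq ?_)
      rw [Finset.card_univ, nsmul_eq_mul, mul_comm]
      rfl
    exact div_le_of_le_mul₀ hX hM0 havg
  have hsum : ∑ j ∈ Finset.Icc 2 l, (2 : ℝ) ^ (-((j - 1).choose 2 : ℤ)) * deltaJD n H j τ
      ≤ 2 * M := by
    calc _ ≤ ∑ j ∈ Finset.Icc 2 l, (2 : ℝ) ^ (-((j - 1).choose 2 : ℤ)) * M :=
          Finset.sum_le_sum fun j hj => mul_le_mul_of_nonneg_left (hδ j hj) (by positivity)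
      _ = (∑ j ∈ Finset.Icc 2 l, (2 : ℝ) ^ (-((j - 1).choose 2 : ℤ))) * M := by
          rw [Finset.sum_mul]
      _ ≤ 2 * M := mul_le_mul_of_nonneg_right (choose_sum l) hM0
  rw [codegD]
  refine (mul_le_mul_of_nonneg_left hsum (by positivity)).trans (le_of_eq ?_)
  rw [zpow_sub₀ (by norm_num), zpow_natCast, hM, zpow_one]
  ring
end
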